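/- arXiv:2007.11482 — 2 statements merged into one kernel-verified Lean document; each statement's English description precedes it below -/
import Mathlib

section
/- Mutual information at high SNR: if σ² = L/(α log L) with α > 2 fixed, then the single-sample mutual information in the MRA model satisfies I(X; Y) = (L/2)·log(1 + σ^{−2}) − (1 + o(1))·log L as L → ∞; equivalently, lim_{L→∞} I(X; Y)/log L = α/2 − 1. -/
open MeasureTheory ProbabilityTheory Filter
open scoped ENNReal

namespace MRAformal

/-- Standard Gaussian measure `N(0, I_L)` on `ℝ^L`. -/
noncomputable def stdGaussian (L : ℕ) : Measure (Fin L → ℝ) :=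
  Measure.pi fun _ => gaussianReal 0 1

/-- Uniform distribution on `{0, …, L-1}`. -/
noncomputable def unifFin (L : ℕ) : Measure (Fin L) :=
  ((L : ℝ≥0∞))⁻¹ • Measure.count

/-- Alignment distortion `ρ(x, x̂) = L⁻¹ min_ℓ ‖x - R_ℓ x̂‖²`,
where `(R_ℓ x̂)_j = x̂_{j+ℓ mod L}`. -/
noncomputable def rho (L : ℕ) (x xh : Fin L → ℝ) : ℝ :=
  (L : ℝ)⁻¹ * ⨅ ℓ : Fin L, ∑ j, (x j - xh (j + ℓ)) ^ 2

/-- Base probability space for the MRA model with `n` samples: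
the signal `X`, the i.i.d. uniform shifts `ℓ_i`, and the i.i.d. Gaussian noises `Z_i`. -/
noncomputable def mraBase (L n : ℕ) :
    Measure ((Fin L → ℝ) × (Fin n → Fin L) × (Fin n → Fin L → ℝ)) :=
  (stdGaussian L).prod ((Measure.pi fun _ => unifFin L).prod (Measure.pi fun _ => stdGaussian L))

/-- The measurements `Y_i = R_{ℓ_i} X + σ Z_i`. -/
def mraY (L n : ℕ) (σ : ℝ) (ω : (Fin L → ℝ) × (Fin n → Fin L) × (Fin n → Fin L → ℝ)) :
    Fin n → Fin L → ℝ :=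
  fun i j => ω.1 (j + ω.2.1 i) + σ * ω.2.2 i j

/-- `MSE*_MRA(L, σ², n)`: the infimum over measurable estimators `X̂(Y_1,…,Y_n)` of `E ρ(X, X̂)`.
Here `σ` is the noise standard deviation. -/
noncomputable def MSEstarMRA (L n : ℕ) (σ : ℝ) : ℝ :=
  sInf { e : ℝ | ∃ f : (Fin n → Fin L → ℝ) → (Fin L → ℝ), Measurable f ∧
    e = ∫ ω, rho L ω.1 (f (mraY L n σ ω)) ∂(mraBase L n) }

/-- `n*_MRA(L, σ², ε) = min {n : MSE*_MRA(L, σ², n) ≤ ε}`. -/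
noncomputable def nstarMRA (L : ℕ) (σ ε : ℝ) : ℕ :=
  sInf { n : ℕ | MSEstarMRA L n σ ≤ ε }

/-- Noise level such that `σ²(α) = L / (α log L)`. -/
noncomputable def sigmaAlpha (L : ℕ) (α : ℝ) : ℝ :=
  Real.sqrt ((L : ℝ) / (α * Real.log L))

/-- `n*_MRA(L, α, ε) := n*_MRA(L, σ²(α), ε)`. -/
noncomputable def nstarMRAa (L : ℕ) (α ε : ℝ) : ℕ :=
  nstarMRA L (sigmaAlpha L α) ε

/-- Mutual information `I(U; V)`: the Kullback–Leibler divergence of the joint law with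
respect to the product of its marginals (natural logarithm), expressed as the integral of
the log of the Radon–Nikodym derivative. -/
noncomputable def mutualInfo {α β : Type*} [MeasurableSpace α] [MeasurableSpace β]
    (μ : Measure (α × β)) : ℝ :=
  ∫ p, Real.log ((μ.rnDeriv ((μ.map Prod.fst).prod (μ.map Prod.snd))) p).toReal ∂μ

/-- Joint law of `(X, (Y_1,…,Y_n))` in the MRA model. -/
noncomputable def mraJoint (L n : ℕ) (σ : ℝ) :
    Measure ((Fin L → ℝ) × (Fin n → Fin L → ℝ)) :=
  (mraBase L n).map fun ω => (ω.1, mraY L n σ ω)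

/-- Joint law of `(X, Y)` for a single MRA measurement `Y = R_ℓ X + σ Z`. -/
noncomputable def mraJoint1 (L : ℕ) (σ : ℝ) : Measure ((Fin L → ℝ) × (Fin L → ℝ)) :=
  ((stdGaussian L).prod ((unifFin L).prod (stdGaussian L))).map
    fun ω => (ω.1, fun j => ω.1 (j + ω.2.1) + σ * ω.2.2 j)


instance instProbStd (L : ℕ) : IsProbabilityMeasure (stdGaussian L) := by
  unfold stdGaussian; infer_instance

/-- Tonelli for products of coordinate functions. -/
lemma lintegral_pi_prod {ι : Type*} [Fintype ι] (m : ι → Measure ℝ)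
    [∀ i, IsProbabilityMeasure (m i)] (f : ι → ℝ → ℝ≥0∞) (hf : ∀ i, Measurable (f i)) :
    ∫⁻ x, ∏ i, f i (x i) ∂(Measure.pi m) = ∏ i, ∫⁻ t, f i t ∂(m i) := by
  rw [lintegral_prod_eq_prod_lintegral_of_indepFun Finset.univ (fun i (x : ι → ℝ) => f i (x i))
    (iIndepFun_pi fun i => (hf i).aemeasurable) (fun i => (hf i).comp (measurable_pi_apply i))]
  refine Finset.prod_congr rfl fun i _ => ?_
  rw [← (measurePreserving_eval m i).lintegral_comp (hf i)]

lemma pi_withDensity {ι : Type*} [Fintype ι] (m : ι → Measure ℝ)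
    [∀ i, IsProbabilityMeasure (m i)] (f : ι → ℝ → ℝ≥0∞) (hf : ∀ i, Measurable (f i))
    [∀ i, IsProbabilityMeasure ((m i).withDensity (f i))] :
    Measure.pi (fun i => (m i).withDensity (f i)) =
      (Measure.pi m).withDensity (fun x => ∏ i, f i (x i)) := by
  refine Measure.pi_eq fun s hs => ?_
  rw [withDensity_apply _ (MeasurableSet.univ_pi hs),
    ← lintegral_indicator (MeasurableSet.univ_pi hs)]
  have h1 : (Set.univ.pi s).indicator (fun x : ι → ℝ => ∏ i, f i (x i)) =
      fun x => ∏ i, (s i).indicator (f i) (x i) := by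
    funext x
    by_cases hx : x ∈ Set.univ.pi s
    · rw [Set.indicator_of_mem hx]
      refine Finset.prod_congr rfl fun i _ => ?_
      rw [Set.indicator_of_mem (hx i (Set.mem_univ i))]
    · rw [Set.indicator_of_notMem hx]
      simp only [Set.mem_univ_pi, not_forall] at hx
      obtain ⟨i, hi⟩ := hx
      exact (Finset.prod_eq_zero (Finset.mem_univ i) (Set.indicator_of_notMem hi _)).symm
  rw [h1, lintegral_pi_prod m _ (fun i => (hf i).indicator (hs i))]
  refine Finset.prod_congr rfl fun i _ => ?_
  rw [withDensity_apply _ (hs i), lintegral_indicator (hs i)]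

/-- exponent of the one-dimensional density ratio -/
noncomputable def rexpo (v : NNReal) (c y : ℝ) : ℝ :=
  Real.log (1 + (v : ℝ)⁻¹) / 2 + (- (y - c) ^ 2 / (2 * v) + y ^ 2 / (2 * (1 + v)))

lemma gaussianReal_eq_withDensity (v : NNReal) (hv : v ≠ 0) (c : ℝ) :
    gaussianReal c v = (gaussianReal 0 (1 + v)).withDensity
      (fun y => ENNReal.ofReal (Real.exp (rexpo v c y))) := by
  have hv1 : (1 + v) ≠ 0 := by positivity
  have hvp : (0:ℝ) < v := by positivity
  rw [gaussianReal_of_var_ne_zero _ hv, gaussianReal_of_var_ne_zero _ hv1,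
    ← withDensity_mul _ (measurable_gaussianPDF _ _) (by unfold rexpo; fun_prop)]
  congr 1
  funext y
  simp only [Pi.mul_apply, gaussianPDF]
  rw [← ENNReal.ofReal_mul (gaussianPDFReal_nonneg _ _ _)]
  congr 1
  simp only [gaussianPDFReal, rexpo, sub_zero]
  rw [Real.exp_add, Real.exp_add, ← Real.log_sqrt (by positivity), Real.exp_log (by positivity)]
  have : (1 + (v:ℝ)⁻¹) = (1 + v) / v := by field_simp; ring
  rw [this, Real.sqrt_div (by positivity), Real.sqrt_mul (by positivity) (v : ℝ),
    Real.sqrt_mul (by positivity) ((1 + v : NNReal) : ℝ)]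
  push_cast
  have h2 : Real.exp (-y ^ 2 / (2 * (1 + (v:ℝ)))) * Real.exp (y ^ 2 / (2 * (1 + (v:ℝ)))) = 1 := by
    rw [← Real.exp_add, neg_div, neg_add_cancel, Real.exp_zero]
  have h3 : 0 < Real.sqrt (1 + (v:ℝ)) := by positivity
  have h4 : 0 < Real.sqrt (v:ℝ) := by positivity
  have h5 : 0 < Real.sqrt (2 * Real.pi) := by positivity
  calc _ = (√(2 * Real.pi) * √(v:ℝ))⁻¹ * Real.exp (-(y - c) ^ 2 / (2 * v)) * 1 := by ring
    _ = (√(2 * Real.pi) * √(v:ℝ))⁻¹ * Real.exp (-(y - c) ^ 2 / (2 * v)) *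
      (Real.exp (-y ^ 2 / (2 * (1 + (v:ℝ)))) * Real.exp (y ^ 2 / (2 * (1 + (v:ℝ))))) := by rw [h2]
    _ = _ := by field_simp

/-- measurement with shift `l` -/
def obs {L : ℕ} (σ : ℝ) (l : Fin L) (p : (Fin L → ℝ) × (Fin L → ℝ)) : Fin L → ℝ :=
  fun j => p.1 (j + l) + σ * p.2 j

lemma measurable_obs {L : ℕ} (σ : ℝ) (l : Fin L) : Measurable (obs σ l) := by
  unfold obs; fun_prop

/-- The law of `Y`. -/
noncomputable def lawY (L : ℕ) (v : NNReal) : Measure (Fin L → ℝ) :=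
  Measure.pi fun _ => gaussianReal 0 (1 + v)

instance instProbY (L : ℕ) (v : NNReal) : IsProbabilityMeasure (lawY L v) := by
  unfold lawY; infer_instance

lemma map_mul_gauss (σ : ℝ) (v : NNReal) (hσ : σ ^ 2 = v) (c : ℝ) :
    (gaussianReal 0 1).map (fun z => c + σ * z) = gaussianReal c v := by
  have h1 : (fun z : ℝ => c + σ * z) = (fun y => c + y) ∘ (fun z => σ * z) := rfl
  rw [h1, ← Measure.map_map (by fun_prop) (by fun_prop), gaussianReal_map_const_mul,
    gaussianReal_map_const_add]
  congr 1
  · ring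
  · ext; simp [hσ]

/-- log-density exponent for shift `l` -/
noncomputable def qexpo {L : ℕ} (v : NNReal) (l : Fin L) (x y : Fin L → ℝ) : ℝ :=
  ∑ j, rexpo v (x (j + l)) (y j)

lemma measurable_qexpo {L : ℕ} (v : NNReal) (l : Fin L) :
    Measurable (fun p : (Fin L → ℝ) × (Fin L → ℝ) => qexpo v l p.1 p.2) := by
  unfold qexpo rexpo; fun_prop

lemma map_cond {L : ℕ} (σ : ℝ) (v : NNReal) (hσ : σ ^ 2 = v) (hv : v ≠ 0) (l : Fin L)
    (x : Fin L → ℝ) :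
    (stdGaussian L).map (fun z => obs σ l (x, z)) =
      (lawY L v).withDensity (fun y => ENNReal.ofReal (Real.exp (qexpo v l x y))) := by
  unfold stdGaussian obs lawY
  have e : ∀ i : Fin L, (gaussianReal 0 1).map (fun z => x (i + l) + σ * z) =
     (gaussianReal 0 (1 + v)).withDensity
      (fun y => ENNReal.ofReal (Real.exp (rexpo v (x (i + l)) y))) := fun i => by
    rw [map_mul_gauss σ v hσ, gaussianReal_eq_withDensity v hv]
  have hp : ∀ i : Fin L, IsProbabilityMeasure ((gaussianReal 0 (1 + v)).withDensity
      (fun y => ENNReal.ofReal (Real.exp (rexpo v (x (i + l)) y)))) := fun i => by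
    rw [← gaussianReal_eq_withDensity v hv]; infer_instance
  have hp' : ∀ i : Fin L, IsProbabilityMeasure
      ((gaussianReal 0 1).map (fun z => x (i + l) + σ * z)) := fun i => by
    rw [e]; exact hp i
  have := Measure.pi_map_pi (μ := fun _ : Fin L => gaussianReal 0 1)
    (f := fun i z => x (i + l) + σ * z) (fun i => by fun_prop)
  simp only
  rw [this]
  simp_rw [e]
  rw [pi_withDensity (fun _ => gaussianReal 0 (1 + v))
    (fun i y => ENNReal.ofReal (Real.exp (rexpo v (x (i + l)) y)))
    (fun i => by unfold rexpo; fun_prop)]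
  congr 1
  funext y
  rw [← ENNReal.ofReal_prod_of_nonneg (fun _ _ => (Real.exp_pos _).le), ← Real.exp_sum, qexpo]

lemma map_joint {L : ℕ} (σ : ℝ) (v : NNReal) (hσ : σ ^ 2 = v) (hv : v ≠ 0) (l : Fin L) :
    ((stdGaussian L).prod (stdGaussian L)).map (fun p => (p.1, obs σ l p)) =
      ((stdGaussian L).prod (lawY L v)).withDensity
        (fun p => ENNReal.ofReal (Real.exp (qexpo v l p.1 p.2))) := by
  have hm := measurable_obs σ l
  have hq := measurable_qexpo v l
  refine Measure.ext_of_lintegral _ fun f hf => ?_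
  rw [lintegral_map hf (by fun_prop), lintegral_prod _ (by fun_prop),
    lintegral_withDensity_eq_lintegral_mul _ (by fun_prop) hf, lintegral_prod _ (by fun_prop)]
  refine lintegral_congr fun x => ?_
  have hfx : Measurable fun y => f (x, y) := by fun_prop
  have hox : Measurable fun z => obs σ l (x, z) := by fun_prop
  have := lintegral_map (μ := stdGaussian L) hfx hox
  simp only at this ⊢
  rw [← this, map_cond σ v hσ hv, lintegral_withDensity_eq_lintegral_mul _ ?_ hfx]
  · rfl
  · have : Measurable fun y => qexpo v l x y := by unfold qexpo rexpo; fun_prop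
    fun_prop

lemma measurePreserving_shift {L : ℕ} [NeZero L] (l : Fin L) :
    MeasurePreserving (fun (x : Fin L → ℝ) j => x (j + l)) (stdGaussian L) (stdGaussian L) := by
  have := measurePreserving_piCongrLeft (fun _ : Fin L => gaussianReal 0 1) (Equiv.addRight l).symm
  have e : (fun (x : Fin L → ℝ) j => x (j + l)) =
      MeasurableEquiv.piCongrLeft (fun _ : Fin L => ℝ) (Equiv.addRight l).symm := by
    funext x j
    have := Equiv.piCongrLeft_apply_apply (fun _ : Fin L => ℝ) (Equiv.addRight l).symm x (j + l)
    simpa [MeasurableEquiv.coe_piCongrLeft] using this.symm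
  rw [e]
  exact this

lemma map_snd {L : ℕ} [NeZero L] (σ : ℝ) (v : NNReal) (hσ : σ ^ 2 = v) (l : Fin L) :
    ((stdGaussian L).prod (stdGaussian L)).map (obs σ l) = lawY L v := by
  have h1 : MeasurePreserving (fun p : (Fin L → ℝ) × (Fin L → ℝ) => 
      ((fun j => p.1 (j + l)), p.2)) ((stdGaussian L).prod (stdGaussian L))
      ((stdGaussian L).prod (stdGaussian L)) :=
    (measurePreserving_shift l).prod (MeasurePreserving.id _)
  have h2 : MeasurePreserving (fun p : (Fin L → ℝ) × (Fin L → ℝ) => fun j => (p.1 j, p.2 j))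
      ((stdGaussian L).prod (stdGaussian L))
      (Measure.pi fun _ => (gaussianReal 0 1).prod (gaussianReal 0 1)) :=
    (measurePreserving_arrowProdEquivProdArrow ℝ ℝ (Fin L) (fun _ => gaussianReal 0 1)
      (fun _ => gaussianReal 0 1)).symm
  have h3 : MeasurePreserving (fun p : ℝ × ℝ => p.1 + σ * p.2)
      ((gaussianReal 0 1).prod (gaussianReal 0 1)) (gaussianReal 0 (1 + v)) := by
    refine ⟨by fun_prop, ?_⟩
    have hi : IndepFun (fun p : ℝ × ℝ => p.1) (fun p : ℝ × ℝ => σ * p.2)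
      ((gaussianReal 0 1).prod (gaussianReal 0 1)) :=
      indepFun_prod (X := fun x : ℝ => x) (Y := fun x : ℝ => σ * x) (by fun_prop) (by fun_prop)
    have := gaussianReal_add_gaussianReal_of_indepFun (m₁ := 0) (m₂ := 0) (v₁ := 1) (v₂ := v) hi
      (by exact (measurePreserving_fst).map_eq) (by
        have e : (fun p : ℝ × ℝ => σ * p.2) = (fun z => 0 + σ * z) ∘ Prod.snd := by
          funext p; simp
        rw [e, ← Measure.map_map (by fun_prop) (by fun_prop), measurePreserving_snd.map_eq,
          map_mul_gauss σ v hσ])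
    rw [add_zero] at this
    exact this
  have h4 := measurePreserving_pi (fun _ : Fin L => (gaussianReal 0 1).prod (gaussianReal 0 1))
    (fun _ : Fin L => gaussianReal 0 (1 + v)) (fun _ => h3)
  exact (h4.comp (h2.comp h1)).map_eq

lemma mraJoint1_eq (L : ℕ) (σ : ℝ) :
    mraJoint1 L σ = (L : ℝ≥0∞)⁻¹ • ∑ l : Fin L,
      ((stdGaussian L).prod (stdGaussian L)).map (fun p => (p.1, obs σ l p)) := by
  have hm : Measurable fun ω : (Fin L → ℝ) × Fin L × (Fin L → ℝ) =>
      (ω.1, fun j => ω.1 (j + ω.2.1) + σ * ω.2.2 j) := by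
    refine measurable_fst.prodMk (measurable_pi_lambda _ fun j => ?_)
    refine Measurable.add ?_ (by fun_prop)
    have : Measurable fun q : Fin L × (Fin L → ℝ) => q.2 (j + q.1) :=
      measurable_from_prod_countable_right fun l => by
        simpa using measurable_pi_apply (j + l)
    exact this.comp (by fun_prop : Measurable fun ω : (Fin L → ℝ) × Fin L × (Fin L → ℝ) =>
      (ω.2.1, ω.1))
  refine Measure.ext_of_lintegral _ fun f hf => ?_
  unfold mraJoint1 unifFin
  rw [lintegral_map hf hm, lintegral_smul_measure, lintegral_finsetSum_measure,
    lintegral_prod _ (by fun_prop)]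
  have : ∀ l : Fin L, ∫⁻ a, f a ∂(((stdGaussian L).prod (stdGaussian L)).map
      (fun p => (p.1, obs σ l p))) = ∫⁻ x, ∫⁻ z, f (x, obs σ l (x, z)) ∂(stdGaussian L)
        ∂(stdGaussian L) := fun l => by
    have := measurable_obs σ l
    rw [lintegral_map hf (by fun_prop), lintegral_prod _ (by fun_prop)]
  simp_rw [this]
  rw [← lintegral_finsetSum, smul_eq_mul, ← lintegral_const_mul]
  · refine lintegral_congr fun x => ?_
    rw [lintegral_prod _ (by fun_prop), lintegral_smul_measure, lintegral_count, tsum_fintype]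
    rfl
  · refine Finset.measurable_fun_sum _ fun l _ => ?_
    have := measurable_obs σ l
    exact Measurable.lintegral_prod_right' (f := fun p => f (p.1, obs σ l p)) (by fun_prop)
  · intro l _
    have := measurable_obs σ l
    exact Measurable.lintegral_prod_right' (f := fun p => f (p.1, obs σ l p)) (by fun_prop)


lemma lintegral_exp_gauss (c : ℝ) :
    ∫⁻ t, ENNReal.ofReal (Real.exp (c * t)) ∂(gaussianReal 0 1) =
      ENNReal.ofReal (Real.exp (c ^ 2 / 2)) := by
  rw [← ofReal_integral_eq_lintegral_ofReal (integrable_exp_mul_gaussianReal c)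
    (ae_of_all _ fun _ => (Real.exp_pos _).le)]
  have := congrFun (mgf_id_gaussianReal (μ := 0) (v := 1)) c
  simp only [mgf, id] at this
  rw [this]; simp

lemma lintegral_exp_lin {L : ℕ} (c : Fin L → ℝ) :
    ∫⁻ z, ENNReal.ofReal (Real.exp (∑ j, c j * z j)) ∂(stdGaussian L) =
      ENNReal.ofReal (Real.exp (∑ j, c j ^ 2 / 2)) := by
  simp_rw [Real.exp_sum, ENNReal.ofReal_prod_of_nonneg (fun _ _ => (Real.exp_pos _).le)]
  unfold stdGaussian
  rw [lintegral_pi_prod (fun _ => gaussianReal 0 1)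
    (fun j t => ENNReal.ofReal (Real.exp (c j * t))) (fun j => by fun_prop)]
  simp_rw [lintegral_exp_gauss]

lemma lintegral_exp_sq (s : ℝ) (hs : 0 ≤ s) :
    ∫⁻ t, ENNReal.ofReal (Real.exp (-(s * t ^ 2 / 2))) ∂(gaussianReal 0 1) =
      ENNReal.ofReal (Real.exp (-(Real.log (1 + s) / 2))) := by
  have h1s : 0 < 1 + s := by linarith
  set w : NNReal := ⟨(1 + s)⁻¹, by positivity⟩ with hw
  have hw0 : w ≠ 0 := by
    intro h
    have : (w : ℝ) = 0 := by rw [h]; rfl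
    have h2 : (1 + s)⁻¹ = 0 := this
    have : 0 < (1 + s)⁻¹ := by positivity
    linarith
  rw [gaussianReal_of_var_ne_zero _ one_ne_zero,
    lintegral_withDensity_eq_lintegral_mul _ (measurable_gaussianPDF _ _) (by fun_prop)]
  have key : ∀ t, ((gaussianPDF 0 1) * fun t => ENNReal.ofReal (Real.exp (-(s * t ^ 2 / 2)))) t =
      ENNReal.ofReal (Real.exp (-(Real.log (1 + s) / 2))) * gaussianPDF 0 w t := by
    intro t
    simp only [Pi.mul_apply, gaussianPDF]
    rw [← ENNReal.ofReal_mul (gaussianPDFReal_nonneg _ _ _), ← ENNReal.ofReal_mul (Real.exp_pos _).le]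
    congr 1
    simp only [gaussianPDFReal, sub_zero]
    have hwv : (w : ℝ) = (1 + s)⁻¹ := rfl
    rw [Real.exp_neg (Real.log (1 + s) / 2), ← Real.log_sqrt (by positivity),
      Real.exp_log (by positivity), hwv, Real.sqrt_mul (by positivity) ((1 + s)⁻¹), Real.sqrt_inv]
    have h3 : 0 < Real.sqrt (1 + s) := by positivity
    have e1 : -t ^ 2 / (2 * (1 + s)⁻¹) = -t ^ 2 / (2 * ((1 : NNReal) : ℝ)) + -(s * t ^ 2 / 2) := by
      field_simp
      push_cast
      ring
    rw [e1, Real.exp_add]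
    simp only [NNReal.coe_one, mul_one]
    field_simp
  rw [lintegral_congr key, lintegral_const_mul _ (measurable_gaussianPDF _ _),
    lintegral_gaussianPDF_eq_one _ hw0, mul_one]

lemma lintegral_exp_sq_pi {L : ℕ} (s : ℝ) (hs : 0 ≤ s) :
    ∫⁻ x, ENNReal.ofReal (Real.exp (∑ j, -(s * x j ^ 2 / 2))) ∂(stdGaussian L) =
      ENNReal.ofReal (Real.exp (-((L : ℝ) / 2 * Real.log (1 + s)))) := by
  simp_rw [Real.exp_sum, ENNReal.ofReal_prod_of_nonneg (fun _ _ => (Real.exp_pos _).le)]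
  unfold stdGaussian
  rw [lintegral_pi_prod (fun _ => gaussianReal 0 1)
    (fun j t => ENNReal.ofReal (Real.exp (-(s * t ^ 2 / 2)))) (fun j => by fun_prop)]
  simp_rw [lintegral_exp_sq s hs]
  rw [← ENNReal.ofReal_prod_of_nonneg (fun _ _ => (Real.exp_pos _).le), ← Real.exp_sum]
  congr 2
  simp
  ring

/-- Sign flip of a coordinate kills odd functions. -/
lemma integral_odd {L : ℕ} (k : Fin L) (h : (Fin L → ℝ) → ℝ) (hm : Measurable h)
    (hodd : ∀ x, h (fun i => if i = k then - x i else x i) = - h x) :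
    ∫ x, h x ∂(stdGaussian L) = 0 := by
  have h1 : MeasurePreserving (fun (x : Fin L → ℝ) i => if i = k then - x i else x i)
      (stdGaussian L) (stdGaussian L) := by
    refine measurePreserving_pi (fun _ : Fin L => gaussianReal 0 1)
      (fun _ : Fin L => gaussianReal 0 1) (f := fun i t => if i = k then -t else t) fun i => ?_
    by_cases hi : i = k
    · simp only [hi, if_true]
      refine ⟨by fun_prop, ?_⟩
      rw [gaussianReal_map_neg, neg_zero]
    · simp only [hi, if_false]
      exact MeasurePreserving.id _
  have h2 : ∫ x, h x ∂(stdGaussian L) = - ∫ x, h x ∂(stdGaussian L) := by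
    conv_lhs => rw [← h1.map_eq]
    rw [integral_map h1.measurable.aemeasurable hm.aestronglyMeasurable]
    simp_rw [hodd]
    rw [integral_neg]
  linarith

/-- fourth moment -/
noncomputable def m4 : ℝ := ∫ t, t ^ 4 ∂(gaussianReal 0 1)

lemma integrable_pow_gauss (n : ℕ) : Integrable (fun t : ℝ => t ^ n) (gaussianReal 0 1) := by
  have h : MemLp id (n : ℝ≥0∞) (gaussianReal 0 1) := memLp_id_gaussianReal' _ (by simp)
  have := h.integrable_norm_pow'
  refine this.mono' (by fun_prop) (ae_of_all _ fun t => by simp)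

lemma integrable_coord_pow {L : ℕ} (n : ℕ) (j : Fin L) :
    Integrable (fun x : Fin L → ℝ => x j ^ n) (stdGaussian L) :=
  (measurePreserving_eval (fun _ : Fin L => gaussianReal 0 1) j).integrable_comp_of_integrable
    (integrable_pow_gauss n)

lemma integral_coord_pow {L : ℕ} (n : ℕ) (j : Fin L) :
    ∫ x, x j ^ n ∂(stdGaussian L) = ∫ t, t ^ n ∂(gaussianReal 0 1) := by
  have := (measurePreserving_eval (fun _ : Fin L => gaussianReal 0 1) j)
  rw [← this.map_eq, integral_map this.measurable.aemeasurable (by fun_prop)]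
  rfl

lemma integral_sq_gauss : ∫ t, t ^ 2 ∂(gaussianReal 0 1) = 1 := by
  have h := variance_fun_id_gaussianReal (μ := 0) (v := 1)
  rw [variance_eq_integral (by fun_prop)] at h
  simpa using h

lemma m4_nonneg : 0 ≤ m4 := integral_nonneg fun t => by positivity

lemma abs_four_le (a b c d : ℝ) : |a * b * (c * d)| ≤ (a ^ 4 + b ^ 4 + c ^ 4 + d ^ 4) / 4 := by
  rw [abs_le]
  constructor <;>
  nlinarith [sq_nonneg (a * b - c * d), sq_nonneg (a * b + c * d), sq_nonneg (a ^ 2 - b ^ 2),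
    sq_nonneg (c ^ 2 - d ^ 2)]

lemma integrable_four {L : ℕ} (a b c d : Fin L) :
    Integrable (fun x : Fin L → ℝ => x a * x b * (x c * x d)) (stdGaussian L) := by
  refine Integrable.mono' (((((integrable_coord_pow 4 a).add (integrable_coord_pow 4 b)).add
    (integrable_coord_pow 4 c)).add (integrable_coord_pow 4 d)).div_const 4) (by fun_prop)
    (ae_of_all _ fun x => ?_)
  exact abs_four_le _ _ _ _

lemma integral_four_le {L : ℕ} (a b c d : Fin L) :
    ∫ x, x a * x b * (x c * x d) ∂(stdGaussian L) ≤ m4 := by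
  have hi := ((((integrable_coord_pow 4 a).fun_add (integrable_coord_pow 4 b)).fun_add
    (integrable_coord_pow 4 c)).fun_add (integrable_coord_pow 4 d)).div_const 4
  have : ∫ x, x a * x b * (x c * x d) ∂(stdGaussian L) ≤
      ∫ x, (x a ^ 4 + x b ^ 4 + x c ^ 4 + x d ^ 4) / 4 ∂(stdGaussian L) :=
    integral_mono (integrable_four a b c d) hi fun x => (le_abs_self _).trans (abs_four_le _ _ _ _)
  refine this.trans (le_of_eq ?_)
  rw [integral_div, integral_add (((integrable_coord_pow 4 a).fun_add (integrable_coord_pow 4 b)).fun_add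
    (integrable_coord_pow 4 c)) (integrable_coord_pow 4 d),
    integral_add ((integrable_coord_pow 4 a).fun_add (integrable_coord_pow 4 b))
    (integrable_coord_pow 4 c),
    integral_add (integrable_coord_pow 4 a) (integrable_coord_pow 4 b)]
  simp_rw [integral_coord_pow]
  unfold m4
  ring

/-- correlation of two shifts -/
noncomputable def corr {L : ℕ} (l k : Fin L) (x : Fin L → ℝ) : ℝ := ∑ j, x (j + l) * x (j + k)

lemma corr_sq {L : ℕ} (l k : Fin L) (x : Fin L → ℝ) :
    corr l k x ^ 2 = ∑ j, ∑ i, x (j + l) * x (j + k) * (x (i + l) * x (i + k)) := by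
  rw [corr, sq, Finset.sum_mul_sum]

lemma integrable_corr_sq {L : ℕ} (l k : Fin L) :
    Integrable (fun x => corr l k x ^ 2) (stdGaussian L) := by
  simp_rw [corr_sq]
  exact integrable_finsetSum _ fun j _ => integrable_finsetSum _ fun i _ => integrable_four _ _ _ _

lemma integral_corr_sq_le {L : ℕ} [NeZero L] (l k : Fin L) (hlk : l ≠ k) :
    ∫ x, corr l k x ^ 2 ∂(stdGaussian L) ≤ 2 * m4 * L := by
  simp_rw [corr_sq]
  rw [integral_finsetSum _ fun j _ => integrable_finsetSum _ fun i _ => integrable_four _ _ _ _]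
  simp_rw [integral_finsetSum _ fun i _ => integrable_four _ _ _ _]
  have hterm : ∀ j i : Fin L, ∫ x, x (j + l) * x (j + k) * (x (i + l) * x (i + k)) ∂(stdGaussian L) ≤
      (if i = j then m4 else 0) + (if i = j + k - l then m4 else 0) := by
    intro j i
    by_cases h1 : i = j
    · have := integral_four_le (j + l) (j + k) (i + l) (i + k)
      rw [if_pos h1]
      split_ifs <;> linarith [m4_nonneg]
    by_cases h2 : i = j + k - l
    · have := integral_four_le (j + l) (j + k) (i + l) (i + k)
      rw [if_neg h1, if_pos h2]
      linarith
    rw [if_neg h1, if_neg h2, add_zero]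
    refine le_of_eq (integral_odd (i + l) _ (by fun_prop) fun x => ?_)
    have n1 : j + l ≠ i + l := fun h => h1 (add_right_cancel h).symm
    have n2 : j + k ≠ i + l := fun h => h2 (by rw [h]; simp)
    have n3 : i + k ≠ i + l := fun h => hlk (add_left_cancel h).symm
    simp only [n1, n2, n3, if_true, if_false]
    ring
  calc _ ≤ ∑ j : Fin L, ∑ i : Fin L, ((if i = j then m4 else 0) +
        (if i = j + k - l then m4 else 0)) :=
      Finset.sum_le_sum fun j _ => Finset.sum_le_sum fun i _ => hterm j i
    _ = 2 * m4 * L := by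
      simp [Finset.sum_add_distrib]
      ring

lemma lintegral_lin_sq {L : ℕ} (c : Fin L → ℝ) :
    ∫⁻ z, ENNReal.ofReal ((∑ j, c j * z j) ^ 2) ∂(stdGaussian L) =
      ENNReal.ofReal (∑ j, c j ^ 2) := by
  have hint : ∀ j i : Fin L, Integrable (fun z : Fin L → ℝ => c j * z j * (c i * z i))
      (stdGaussian L) := by
    intro j i
    refine Integrable.mono' (((integrable_coord_pow 2 j).add
      (integrable_coord_pow 2 i)).const_mul |c j * c i|) (by fun_prop) (ae_of_all _ fun z => ?_)
    have : c j * z j * (c i * z i) = (c j * c i) * (z j * z i) := by ring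
    rw [this, norm_mul, Real.norm_eq_abs, Real.norm_eq_abs]
    refine mul_le_mul_of_nonneg_left ?_ (abs_nonneg _)
    simp only [Pi.add_apply]
    rw [abs_le]; constructor <;> nlinarith [sq_nonneg (z j + z i), sq_nonneg (z j - z i)]
  have hsq : ∀ z : Fin L → ℝ, (∑ j, c j * z j) ^ 2 = ∑ j, ∑ i, c j * z j * (c i * z i) :=
    fun z => by rw [sq, Finset.sum_mul_sum]
  rw [← ofReal_integral_eq_lintegral_ofReal]
  · congr 1
    simp_rw [hsq]
    rw [integral_finsetSum _ fun j _ => integrable_finsetSum _ fun i _ => hint _ _]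
    simp_rw [integral_finsetSum _ fun i _ => hint _ _]
    refine Finset.sum_congr rfl fun j _ => ?_
    rw [Finset.sum_eq_single j]
    · have : ∀ z : Fin L → ℝ, c j * z j * (c j * z j) = c j ^ 2 * z j ^ 2 := fun z => by ring
      simp_rw [this]
      rw [integral_const_mul, integral_coord_pow, integral_sq_gauss, mul_one]
    · intro i _ hij
      refine integral_odd i _ (by fun_prop) fun x => ?_
      simp only [hij.symm, if_true, if_false]
      ring
    · simp
  · simp_rw [hsq]
    exact integrable_finsetSum _ fun j _ => integrable_finsetSum _ fun i _ => hint _ _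
  · exact ae_of_all _ fun _ => sq_nonneg _

lemma lintegral_sum_sq {L : ℕ} (l : Fin L) :
    ∫⁻ x, ENNReal.ofReal (∑ j, x (j + l) ^ 2) ∂(stdGaussian L) = ENNReal.ofReal L := by
  rw [← ofReal_integral_eq_lintegral_ofReal (integrable_finsetSum _ fun j _ =>
    integrable_coord_pow 2 _) (ae_of_all _ fun _ => by positivity)]
  rw [integral_finsetSum _ fun j _ => integrable_coord_pow 2 _]
  simp_rw [integral_coord_pow, integral_sq_gauss]
  simp

/-- log-likelihood ratio of the shift `k` against the true shift `l` -/
noncomputable def eexpo {L : ℕ} (τ : ℝ) (l k : Fin L) (x z : Fin L → ℝ) : ℝ :=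
  ∑ j, (-(τ * (x (j + l) - x (j + k))) ^ 2 / 2 + (-(τ * (x (j + l) - x (j + k)))) * z j)

lemma eexpo_self {L : ℕ} (τ : ℝ) (l : Fin L) (x z : Fin L → ℝ) : eexpo τ l l x z = 0 := by
  simp [eexpo]

lemma sum_shift {L : ℕ} [NeZero L] (l : Fin L) (f : Fin L → ℝ) : ∑ j, f (j + l) = ∑ j, f j :=
  Equiv.sum_comp (Equiv.addRight l) f

lemma eexpo_eq {L : ℕ} [NeZero L] (τ : ℝ) (l k : Fin L) (x z : Fin L → ℝ) :
    eexpo τ l k x z = -(τ ^ 2 * ∑ j, x j ^ 2) + τ ^ 2 * corr l k x - ∑ j, τ * x (j + l) * z j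
      + ∑ j, τ * x (j + k) * z j := by
  have h1 := sum_shift l (fun j => x j ^ 2)
  have h2 := sum_shift k (fun j => x j ^ 2)
  have : ∀ j, (-(τ * (x (j + l) - x (j + k))) ^ 2 / 2 + (-(τ * (x (j + l) - x (j + k)))) * z j) =
    -(τ ^ 2 / 2) * x (j + l) ^ 2 + -(τ ^ 2 / 2) * x (j + k) ^ 2 + τ ^ 2 * (x (j + l) * x (j + k))
     + - (τ * x (j + l) * z j) + τ * x (j + k) * z j := fun j => by ring
  simp only [eexpo, this, Finset.sum_add_distrib, ← Finset.mul_sum, h1, h2, corr,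
    Finset.sum_neg_distrib]
  ring

/-- bad part -/
noncomputable def Pbad {L : ℕ} (τ ε : ℝ) (l k : Fin L) (x z : Fin L → ℝ) : ℝ :=
  if ε * L < corr l k x then Real.exp (eexpo τ l k x z) else 0

/-- good part -/
noncomputable def Qgood {L : ℕ} (τ ε : ℝ) (k : Fin L) (x z : Fin L → ℝ) : ℝ :=
  Real.exp (τ ^ 2 * (ε * L) - τ ^ 2 * ∑ j, x j ^ 2 + ∑ j, τ * x (j + k) * z j)

lemma Pbad_nonneg {L : ℕ} (τ ε : ℝ) (l k : Fin L) (x z : Fin L → ℝ) : 0 ≤ Pbad τ ε l k x z := by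
  unfold Pbad; split_ifs <;> positivity

lemma Qgood_nonneg {L : ℕ} (τ ε : ℝ) (k : Fin L) (x z : Fin L → ℝ) : 0 ≤ Qgood τ ε k x z :=
  (Real.exp_pos _).le

lemma log_bound {L : ℕ} [NeZero L] (τ ε : ℝ) (l : Fin L) (x z : Fin L → ℝ) :
    Real.log (∑ k, Real.exp (eexpo τ l k x z)) ≤ |∑ j, τ * x (j + l) * z j| +
      ∑ k ∈ Finset.univ.erase l, Pbad τ ε l k x z + ∑ k, Qgood τ ε k x z := by
  set W := ∑ j, τ * x (j + l) * z j with hW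
  set P := ∑ k ∈ Finset.univ.erase l, Pbad τ ε l k x z with hP
  have hP0 : 0 ≤ P := Finset.sum_nonneg fun k _ => Pbad_nonneg _ _ _ _ _ _
  have hQ0 : 0 ≤ ∑ k, Qgood τ ε k x z := Finset.sum_nonneg fun k _ => (Real.exp_pos _).le
  have hW1 : 1 ≤ Real.exp |W| := Real.one_le_exp (abs_nonneg _)
  have hk : ∀ k, Real.exp (eexpo τ l k x z) ≤ Pbad τ ε l k x z + Real.exp |W| * Qgood τ ε k x z := by
    intro k
    have hq : 0 ≤ Real.exp |W| * Qgood τ ε k x z := mul_nonneg (Real.exp_pos _).le (Real.exp_pos _).le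
    unfold Pbad
    split_ifs with h
    · linarith
    · rw [zero_add, Qgood, ← Real.exp_add, Real.exp_le_exp, eexpo_eq, ← hW]
      have h1 := neg_abs_le W
      have h2 : τ ^ 2 * corr l k x ≤ τ ^ 2 * (ε * L) :=
        mul_le_mul_of_nonneg_left (not_lt.mp h) (sq_nonneg _)
      linarith
  have hsum : ∑ k, Real.exp (eexpo τ l k x z) ≤
      Real.exp |W| * (P + ∑ k, Qgood τ ε k x z + 1) := by
    rw [← Finset.add_sum_erase _ _ (Finset.mem_univ l), eexpo_self, Real.exp_zero]
    have h1 : ∑ k ∈ Finset.univ.erase l, Real.exp (eexpo τ l k x z) ≤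
        P + Real.exp |W| * ∑ k, Qgood τ ε k x z := by
      calc _ ≤ ∑ k ∈ Finset.univ.erase l, (Pbad τ ε l k x z + Real.exp |W| * Qgood τ ε k x z) :=
            Finset.sum_le_sum fun k _ => hk k
        _ = P + Real.exp |W| * ∑ k ∈ Finset.univ.erase l, Qgood τ ε k x z := by
            rw [Finset.sum_add_distrib, Finset.mul_sum]
        _ ≤ _ := by
            gcongr
            · exact fun _ _ _ => (Real.exp_pos _).le
            · exact Finset.erase_subset _ _
    nlinarith [mul_nonneg (sub_nonneg.mpr hW1) hP0]
  have hpos : 0 < ∑ k, Real.exp (eexpo τ l k x z) :=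
    Finset.sum_pos (fun _ _ => Real.exp_pos _) ⟨l, Finset.mem_univ l⟩
  calc _ ≤ Real.log (Real.exp |W| * (P + ∑ k, Qgood τ ε k x z + 1)) := Real.log_le_log hpos hsum
    _ = |W| + Real.log (P + ∑ k, Qgood τ ε k x z + 1) := by
      rw [Real.log_mul (Real.exp_pos _).ne' (by positivity), Real.log_exp]
    _ ≤ |W| + (P + ∑ k, Qgood τ ε k x z) := by
      have := Real.log_le_sub_one_of_pos (x := P + ∑ k, Qgood τ ε k x z + 1) (by positivity)
      linarith
    _ = _ := by ring

lemma measurable_corr {L : ℕ} (l k : Fin L) : Measurable (corr l k) := by unfold corr; fun_prop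

lemma measurable_eexpo {L : ℕ} (τ : ℝ) (l k : Fin L) :
    Measurable (fun p : (Fin L → ℝ) × (Fin L → ℝ) => eexpo τ l k p.1 p.2) := by
  unfold eexpo; fun_prop

lemma measurable_Pbad {L : ℕ} (τ ε : ℝ) (l k : Fin L) :
    Measurable (fun p : (Fin L → ℝ) × (Fin L → ℝ) => Pbad τ ε l k p.1 p.2) := by
  unfold Pbad
  refine Measurable.ite (measurableSet_lt measurable_const
    ((measurable_corr l k).comp measurable_fst)) (measurable_eexpo τ l k).exp measurable_const

lemma measurable_Qgood {L : ℕ} (τ ε : ℝ) (k : Fin L) :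
    Measurable (fun p : (Fin L → ℝ) × (Fin L → ℝ) => Qgood τ ε k p.1 p.2) := by
  unfold Qgood; fun_prop

lemma lintegral_Pbad {L : ℕ} [NeZero L] (τ ε : ℝ) (hε : 0 < ε) (l k : Fin L) (hlk : l ≠ k) :
    ∫⁻ p, ENNReal.ofReal (Pbad τ ε l k p.1 p.2) ∂((stdGaussian L).prod (stdGaussian L)) ≤
      ENNReal.ofReal (2 * m4 / ε ^ 2 / L) := by
  have hL : (0:ℝ) < L := by exact_mod_cast Nat.pos_of_ne_zero (NeZero.ne L)
  rw [lintegral_prod _ (measurable_Pbad τ ε l k).ennreal_ofReal.aemeasurable]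
  have hx : ∀ x, ∫⁻ z, ENNReal.ofReal (Pbad τ ε l k x z) ∂(stdGaussian L) ≤
      ENNReal.ofReal (corr l k x ^ 2 / (ε * L) ^ 2) := by
    intro x
    by_cases h : ε * L < corr l k x
    · simp only [Pbad, if_pos h, eexpo, Finset.sum_add_distrib, Real.exp_add]
      simp_rw [ENNReal.ofReal_mul (Real.exp_pos _).le]
      rw [lintegral_const_mul _ (by fun_prop), lintegral_exp_lin,
        ← ENNReal.ofReal_mul (Real.exp_pos _).le, ← Real.exp_add, ← Finset.sum_add_distrib]
      apply ENNReal.ofReal_le_ofReal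
      have : ∑ j, (-(τ * (x (j + l) - x (j + k))) ^ 2 / 2 + (-(τ * (x (j + l) - x (j + k)))) ^ 2 / 2) = 0 :=
        Finset.sum_eq_zero fun j _ => by ring
      rw [this, Real.exp_zero, le_div_iff₀ (by positivity), one_mul]
      exact pow_le_pow_left₀ (by positivity) h.le 2
    · simp [Pbad, if_neg h]
  refine (lintegral_mono hx).trans ?_
  rw [← ofReal_integral_eq_lintegral_ofReal ((integrable_corr_sq l k).div_const _)
    (ae_of_all _ fun _ => by positivity), integral_div]
  apply ENNReal.ofReal_le_ofReal
  calc _ ≤ 2 * m4 * L / (ε * L) ^ 2 := by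
        gcongr
        exact integral_corr_sq_le l k hlk
    _ = _ := by field_simp

lemma lintegral_Qgood {L : ℕ} [NeZero L] (τ ε : ℝ) (k : Fin L) :
    ∫⁻ p, ENNReal.ofReal (Qgood τ ε k p.1 p.2) ∂((stdGaussian L).prod (stdGaussian L)) =
      ENNReal.ofReal (Real.exp (τ ^ 2 * (ε * L) - (L : ℝ) / 2 * Real.log (1 + τ ^ 2))) := by
  rw [lintegral_prod _ (measurable_Qgood τ ε k).ennreal_ofReal.aemeasurable]
  have hx : ∀ x, ∫⁻ z, ENNReal.ofReal (Qgood τ ε k x z) ∂(stdGaussian L) =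
      ENNReal.ofReal (Real.exp (τ ^ 2 * (ε * L))) *
        ENNReal.ofReal (Real.exp (∑ j, -(τ ^ 2 * x j ^ 2 / 2))) := by
    intro x
    simp only [Qgood]
    simp_rw [Real.exp_add, ENNReal.ofReal_mul (Real.exp_pos _).le]
    rw [lintegral_const_mul _ (by fun_prop), lintegral_exp_lin (fun j => τ * x (j + k)),
        ← ENNReal.ofReal_mul (Real.exp_pos _).le, ← ENNReal.ofReal_mul (Real.exp_pos _).le,
        ← Real.exp_add, ← Real.exp_add, sum_shift k (fun j => (τ * x j) ^ 2 / 2)]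
    congr 2
    rw [sub_eq_add_neg, add_assoc, Finset.mul_sum, ← Finset.sum_neg_distrib,
      ← Finset.sum_add_distrib]
    congr 1
    exact Finset.sum_congr rfl fun j _ => by ring
  simp_rw [hx]
  rw [lintegral_const_mul _ (by fun_prop), lintegral_exp_sq_pi _ (sq_nonneg τ),
    ← ENNReal.ofReal_mul (Real.exp_pos _).le, ← Real.exp_add, sub_eq_add_neg]

lemma lintegral_W {L : ℕ} [NeZero L] (τ : ℝ) (hτ : 0 < τ) (l : Fin L) :
    ∫⁻ p, ENNReal.ofReal |∑ j, τ * p.1 (j + l) * p.2 j| ∂((stdGaussian L).prod (stdGaussian L)) ≤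
      ENNReal.ofReal (τ * Real.sqrt L) := by
  have hL : (0:ℝ) < L := by exact_mod_cast Nat.pos_of_ne_zero (NeZero.ne L)
  set t := τ * Real.sqrt L with ht
  have ht0 : 0 < t := by positivity
  have hpt : ∀ p : (Fin L → ℝ) × (Fin L → ℝ), ENNReal.ofReal |∑ j, τ * p.1 (j + l) * p.2 j| ≤
      ENNReal.ofReal (t / 2) + ENNReal.ofReal (1 / (2 * t)) *
        ENNReal.ofReal ((∑ j, τ * p.1 (j + l) * p.2 j) ^ 2) := by
    intro p
    rw [← ENNReal.ofReal_mul (by positivity), ← ENNReal.ofReal_add (by positivity) (by positivity)]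
    apply ENNReal.ofReal_le_ofReal
    set w := ∑ j, τ * p.1 (j + l) * p.2 j
    have h : 0 ≤ (|w| - t) ^ 2 / (2 * t) := by positivity
    have e : (|w| - t) ^ 2 / (2 * t) = t / 2 + 1 / (2 * t) * w ^ 2 - |w| := by
      field_simp
      rw [sub_sq, sq_abs]; ring
    linarith
  refine (lintegral_mono hpt).trans ?_
  rw [lintegral_add_left measurable_const, lintegral_const, measure_univ, mul_one,
    lintegral_const_mul _ (by fun_prop), lintegral_prod _ (by fun_prop)]
  have hx : ∀ x : Fin L → ℝ, ∫⁻ z, ENNReal.ofReal ((∑ j, τ * x (j + l) * z j) ^ 2) ∂(stdGaussian L) =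
      ENNReal.ofReal (τ ^ 2) * ENNReal.ofReal (∑ j, x (j + l) ^ 2) := fun x => by
    rw [lintegral_lin_sq (fun j => τ * x (j + l)), ← ENNReal.ofReal_mul (by positivity),
      Finset.mul_sum]
    simp_rw [mul_pow]
  simp only
  simp_rw [hx]
  rw [lintegral_const_mul _ (by fun_prop), lintegral_sum_sq, ← ENNReal.ofReal_mul (by positivity),
    ← ENNReal.ofReal_mul (by positivity), ← ENNReal.ofReal_add (by positivity) (by positivity)]
  apply ENNReal.ofReal_le_ofReal
  have : τ ^ 2 * L = t ^ 2 := by rw [ht, mul_pow, Real.sq_sqrt hL.le]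
  rw [this]
  apply le_of_eq
  field_simp
  ring

lemma lintegral_log_bound {L : ℕ} [NeZero L] (τ ε : ℝ) (hτ : 0 < τ) (hε : 0 < ε) (l : Fin L) :
    ∫⁻ p, ENNReal.ofReal (Real.log (∑ k, Real.exp (eexpo τ l k p.1 p.2)))
      ∂((stdGaussian L).prod (stdGaussian L)) ≤
      ENNReal.ofReal (τ * Real.sqrt L + 2 * m4 / ε ^ 2 +
        L * Real.exp (τ ^ 2 * (ε * L) - (L : ℝ) / 2 * Real.log (1 + τ ^ 2))) := by
  have hL : (0:ℝ) < L := by exact_mod_cast Nat.pos_of_ne_zero (NeZero.ne L)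
  have hm4 := m4_nonneg
  have hpt : ∀ p : (Fin L → ℝ) × (Fin L → ℝ),
      ENNReal.ofReal (Real.log (∑ k, Real.exp (eexpo τ l k p.1 p.2))) ≤
      ENNReal.ofReal |∑ j, τ * p.1 (j + l) * p.2 j| +
      ∑ k ∈ Finset.univ.erase l, ENNReal.ofReal (Pbad τ ε l k p.1 p.2) +
      ∑ k, ENNReal.ofReal (Qgood τ ε k p.1 p.2) := by
    intro p
    refine (ENNReal.ofReal_le_ofReal (log_bound τ ε l p.1 p.2)).trans ?_
    rw [← ENNReal.ofReal_sum_of_nonneg (fun k _ => Pbad_nonneg _ _ _ _ _ _),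
      ← ENNReal.ofReal_sum_of_nonneg (fun k _ => Qgood_nonneg _ _ _ _ _)]
    exact ENNReal.ofReal_add_le.trans (add_le_add_left ENNReal.ofReal_add_le _)
  refine (lintegral_mono hpt).trans ?_
  have mP := fun k => (measurable_Pbad τ ε l k).ennreal_ofReal
  have mQ := fun k : Fin L => (measurable_Qgood τ ε k).ennreal_ofReal
  rw [lintegral_add_right _ (Finset.measurable_fun_sum _ fun k _ => mQ k),
    lintegral_add_right _ (Finset.measurable_fun_sum _ fun k _ => mP k),
    lintegral_finsetSum _ (fun k _ => mP k), lintegral_finsetSum _ (fun k _ => mQ k),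
    ENNReal.ofReal_add (by positivity) (by positivity),
    ENNReal.ofReal_add (by positivity) (by positivity)]
  refine add_le_add (add_le_add (lintegral_W τ hτ l) ?_) ?_
  · calc _ ≤ ∑ k ∈ Finset.univ.erase l, ENNReal.ofReal (2 * m4 / ε ^ 2 / L) :=
          Finset.sum_le_sum fun k hk => lintegral_Pbad τ ε hε l k (Finset.ne_of_mem_erase hk).symm
      _ ≤ ∑ k : Fin L, ENNReal.ofReal (2 * m4 / ε ^ 2 / L) :=
          Finset.sum_le_sum_of_subset (Finset.erase_subset _ _)
      _ = _ := by
          rw [← ENNReal.ofReal_sum_of_nonneg (fun k _ => by positivity)]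
          congr 1
          simp
          field_simp
  · simp_rw [lintegral_Qgood]
    rw [← ENNReal.ofReal_sum_of_nonneg (fun k _ => by positivity)]
    simp

/-- joint density -/
noncomputable def dens {L : ℕ} (v : NNReal) (p : (Fin L → ℝ) × (Fin L → ℝ)) : ℝ :=
  (L : ℝ)⁻¹ * ∑ k, Real.exp (qexpo v k p.1 p.2)

lemma measurable_dens {L : ℕ} (v : NNReal) : Measurable (dens (L := L) v) := by
  unfold dens
  refine measurable_const.mul (Finset.measurable_fun_sum _ fun k _ => (measurable_qexpo v k).exp)

lemma dens_nonneg {L : ℕ} (v : NNReal) (p : (Fin L → ℝ) × (Fin L → ℝ)) : 0 ≤ dens v p := by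
  unfold dens; positivity

lemma joint_withDensity {L : ℕ} [NeZero L] (σ : ℝ) (v : NNReal) (hσ : σ ^ 2 = v) (hv : v ≠ 0) :
    mraJoint1 L σ = ((stdGaussian L).prod (lawY L v)).withDensity
      (fun p => ENNReal.ofReal (dens v p)) := by
  have hL : (0:ℝ) < L := by exact_mod_cast Nat.pos_of_ne_zero (NeZero.ne L)
  rw [mraJoint1_eq]
  simp_rw [map_joint σ v hσ hv]
  have mq := fun k : Fin L => (measurable_qexpo v k).exp.ennreal_ofReal
  refine Measure.ext fun s hs => ?_
  rw [Measure.smul_apply, Measure.finsetSum_apply, withDensity_apply _ hs]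
  simp_rw [withDensity_apply _ hs]
  rw [← lintegral_finsetSum _ (fun k _ => mq k), smul_eq_mul,
    ← lintegral_const_mul _ (Finset.measurable_fun_sum _ fun k _ => mq k)]
  refine lintegral_congr fun p => ?_
  rw [dens, ENNReal.ofReal_mul (by positivity),
    ENNReal.ofReal_sum_of_nonneg (fun _ _ => (Real.exp_pos _).le),
    ENNReal.ofReal_inv_of_pos hL, ENNReal.ofReal_natCast]

lemma smul_sum_const {L : ℕ} [NeZero L] {Ω : Type*} [MeasurableSpace Ω] (m : Measure Ω) :
    (L : ℝ≥0∞)⁻¹ • ∑ _l : Fin L, m = m := by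
  refine Measure.ext fun s _ => ?_
  rw [Measure.smul_apply, Measure.finsetSum_apply]
  simp only [Finset.sum_const, Finset.card_univ, Fintype.card_fin, nsmul_eq_mul, smul_eq_mul]
  rw [← mul_assoc, ENNReal.inv_mul_cancel (by exact_mod_cast NeZero.ne L) (ENNReal.natCast_ne_top L),
    one_mul]

lemma joint_fst {L : ℕ} [NeZero L] (σ : ℝ) : (mraJoint1 L σ).map Prod.fst = stdGaussian L := by
  rw [mraJoint1_eq, Measure.map_smul, Measure.map_finset_sum' (by fun_prop)]
  have : ∀ l : Fin L, (((stdGaussian L).prod (stdGaussian L)).map (fun p => (p.1, obs σ l p))).map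
      Prod.fst = stdGaussian L := fun l => by
    have := measurable_obs σ l
    rw [Measure.map_map (by fun_prop) (by fun_prop)]
    exact measurePreserving_fst.map_eq
  simp_rw [this]
  exact smul_sum_const _

lemma joint_snd {L : ℕ} [NeZero L] (σ : ℝ) (v : NNReal) (hσ : σ ^ 2 = v) :
    (mraJoint1 L σ).map Prod.snd = lawY L v := by
  rw [mraJoint1_eq, Measure.map_smul, Measure.map_finset_sum' (by fun_prop)]
  have : ∀ l : Fin L, (((stdGaussian L).prod (stdGaussian L)).map (fun p => (p.1, obs σ l p))).map
      Prod.snd = lawY L v := fun l => by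
    have := measurable_obs σ l
    rw [Measure.map_map (by fun_prop) (by fun_prop)]
    exact map_snd σ v hσ l
  simp_rw [this]
  exact smul_sum_const _

lemma mutualInfo_eq {L : ℕ} [NeZero L] (σ : ℝ) (v : NNReal) (hσ : σ ^ 2 = v) (hv : v ≠ 0) :
    mutualInfo (mraJoint1 L σ) = ∫ p, Real.log (dens v p) ∂(mraJoint1 L σ) := by
  unfold mutualInfo
  rw [joint_fst, joint_snd σ v hσ]
  refine integral_congr_ae ?_
  have hac : mraJoint1 L σ ≪ (stdGaussian L).prod (lawY L v) := by
    rw [joint_withDensity σ v hσ hv]; exact withDensity_absolutelyContinuous _ _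
  have h := hac.ae_le (Measure.rnDeriv_withDensity ((stdGaussian L).prod (lawY L v))
    (measurable_dens (L := L) v).ennreal_ofReal)
  rw [← joint_withDensity σ v hσ hv] at h
  filter_upwards [h] with p hp
  rw [hp, ENNReal.toReal_ofReal (dens_nonneg v p)]

lemma qexpo_obs {L : ℕ} (σ : ℝ) (hσ0 : 0 < σ) (v : NNReal) (hσ : σ ^ 2 = v) (l k : Fin L)
    (p : (Fin L → ℝ) × (Fin L → ℝ)) :
    qexpo v k p.1 (obs σ l p) = qexpo v l p.1 (obs σ l p) + eexpo σ⁻¹ l k p.1 p.2 := by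
  unfold qexpo eexpo
  rw [← Finset.sum_add_distrib]
  refine Finset.sum_congr rfl fun j _ => ?_
  simp only [rexpo, obs, ← hσ]
  have h1 : (1 + σ ^ 2) ≠ 0 := by positivity
  field_simp
  ring

lemma log_dens_obs {L : ℕ} [NeZero L] (σ : ℝ) (hσ0 : 0 < σ) (v : NNReal) (hσ : σ ^ 2 = v)
    (l : Fin L) (p : (Fin L → ℝ) × (Fin L → ℝ)) :
    Real.log (dens v (p.1, obs σ l p)) = (-Real.log L + qexpo v l p.1 (obs σ l p)) +
      Real.log (∑ k, Real.exp (eexpo σ⁻¹ l k p.1 p.2)) := by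
  have hL : (0:ℝ) < L := by exact_mod_cast Nat.pos_of_ne_zero (NeZero.ne L)
  have hpos : 0 < ∑ k, Real.exp (eexpo σ⁻¹ l k p.1 p.2) :=
    Finset.sum_pos (fun _ _ => Real.exp_pos _) ⟨l, Finset.mem_univ l⟩
  unfold dens
  simp only
  rw [Finset.sum_congr rfl fun k _ => by rw [qexpo_obs σ hσ0 v hσ l k p, Real.exp_add]]
  rw [← Finset.mul_sum, Real.log_mul (by positivity) (by positivity),
    Real.log_mul (by positivity) (by positivity), Real.log_exp, Real.log_inv]
  ring

lemma integral_qexpo {L : ℕ} [NeZero L] (σ : ℝ) (hσ0 : 0 < σ) (v : NNReal) (hσ : σ ^ 2 = v)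
    (l : Fin L) :
    Integrable (fun p => qexpo v l p.1 (obs σ l p)) ((stdGaussian L).prod (stdGaussian L)) ∧
    ∫ p, qexpo v l p.1 (obs σ l p) ∂((stdGaussian L).prod (stdGaussian L)) =
      (L : ℝ) / 2 * Real.log (1 + (v : ℝ)⁻¹) := by
  set M := (stdGaussian L).prod (stdGaussian L) with hM
  have h1 : (1 + σ ^ 2) ≠ 0 := by positivity
  have e : ∀ (j : Fin L) (p : (Fin L → ℝ) × (Fin L → ℝ)),
      rexpo v (p.1 (j + l)) (obs σ l p j) = Real.log (1 + (v : ℝ)⁻¹) / 2 +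
      (((1 / (2 * (1 + σ ^ 2))) * p.1 (j + l) ^ 2 + (- (1 / (2 * (1 + σ ^ 2)))) * p.2 j ^ 2) +
       (σ / (1 + σ ^ 2)) * (p.1 (j + l) * p.2 j)) := by
    intro j p
    simp only [rexpo, obs, ← hσ]
    field_simp
    ring
  have i1 : ∀ j : Fin L, Integrable (fun p : (Fin L → ℝ) × (Fin L → ℝ) => p.1 (j + l) ^ 2) M :=
    fun j => (integrable_coord_pow 2 (j + l)).comp_fst _
  have i2 : ∀ j : Fin L, Integrable (fun p : (Fin L → ℝ) × (Fin L → ℝ) => p.2 j ^ 2) M :=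
    fun j => (integrable_coord_pow 2 j).comp_snd _
  have ic : ∀ j : Fin L, Integrable (fun x : Fin L → ℝ => x j) (stdGaussian L) := fun j => by
    simpa using integrable_coord_pow 1 j
  have i3 : ∀ j : Fin L, Integrable (fun p : (Fin L → ℝ) × (Fin L → ℝ) => p.1 (j + l) * p.2 j) M :=
    fun j => (ic (j + l)).mul_prod (ic j)
  have v1 : ∀ j : Fin L, ∫ p, p.1 (j + l) ^ 2 ∂M = 1 := fun j => by
    rw [hM, integral_fun_fst (fun x : Fin L → ℝ => x (j + l) ^ 2), integral_coord_pow,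
      integral_sq_gauss]; simp
  have v2 : ∀ j : Fin L, ∫ p, p.2 j ^ 2 ∂M = 1 := fun j => by
    rw [hM, integral_fun_snd (fun x : Fin L → ℝ => x j ^ 2), integral_coord_pow,
      integral_sq_gauss]; simp
  have v3 : ∀ j : Fin L, ∫ p, p.1 (j + l) * p.2 j ∂M = 0 := fun j => by
    rw [hM, integral_prod_mul (fun x : Fin L → ℝ => x (j + l)) (fun x : Fin L → ℝ => x j)]
    have := integral_coord_pow 1 j
    simp only [pow_one] at this
    rw [this, integral_id_gaussianReal, mul_zero]
  have i12 : ∀ j : Fin L, Integrable (fun p : (Fin L → ℝ) × (Fin L → ℝ) =>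
      ((1 / (2 * (1 + σ ^ 2))) * p.1 (j + l) ^ 2 + (- (1 / (2 * (1 + σ ^ 2)))) * p.2 j ^ 2)) M :=
    fun j => ((i1 j).const_mul _).fun_add ((i2 j).const_mul _)
  have i4 : ∀ j : Fin L, Integrable (fun p : (Fin L → ℝ) × (Fin L → ℝ) =>
      (((1 / (2 * (1 + σ ^ 2))) * p.1 (j + l) ^ 2 + (- (1 / (2 * (1 + σ ^ 2)))) * p.2 j ^ 2) +
       (σ / (1 + σ ^ 2)) * (p.1 (j + l) * p.2 j))) M :=
    fun j => (i12 j).fun_add ((i3 j).const_mul _)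
  have it : ∀ j : Fin L, Integrable (fun p => rexpo v (p.1 (j + l)) (obs σ l p j)) M := fun j => by
    simp_rw [e]
    exact (integrable_const _).fun_add (i4 j)
  have vt : ∀ j : Fin L, ∫ p, rexpo v (p.1 (j + l)) (obs σ l p j) ∂M =
      Real.log (1 + (v : ℝ)⁻¹) / 2 := fun j => by
    simp_rw [e]
    rw [integral_add (integrable_const _) (i4 j), integral_add (i12 j) ((i3 j).const_mul _),
      integral_add ((i1 j).const_mul _) ((i2 j).const_mul _), integral_const_mul,
      integral_const_mul, integral_const_mul, v1, v2, v3]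
    simp
  unfold qexpo
  refine ⟨integrable_finsetSum _ fun j _ => it j, ?_⟩
  rw [integral_finsetSum _ fun j _ => it j]
  simp_rw [vt]
  simp
  ring

lemma mutualInfo_bounds {L : ℕ} [NeZero L] (σ : ℝ) (hσ0 : 0 < σ) (ε : ℝ) (hε : 0 < ε) :
    (L : ℝ) / 2 * Real.log (1 + (σ ^ 2)⁻¹) - Real.log L ≤ mutualInfo (mraJoint1 L σ) ∧
    mutualInfo (mraJoint1 L σ) ≤ (L : ℝ) / 2 * Real.log (1 + (σ ^ 2)⁻¹) - Real.log L +
      (σ⁻¹ * Real.sqrt L + 2 * m4 / ε ^ 2 +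
        L * Real.exp ((σ⁻¹) ^ 2 * (ε * L) - (L : ℝ) / 2 * Real.log (1 + (σ⁻¹) ^ 2))) := by
  have hL : (0:ℝ) < L := by exact_mod_cast Nat.pos_of_ne_zero (NeZero.ne L)
  set v : NNReal := ⟨σ ^ 2, sq_nonneg σ⟩ with hvdef
  have hσ : σ ^ 2 = (v : ℝ) := rfl
  have hv : v ≠ 0 := by
    intro h
    have : σ ^ 2 = 0 := by rw [hσ, h]; rfl
    exact (pow_pos hσ0 2).ne' this
  set c := (L : ℝ) / 2 * Real.log (1 + (σ ^ 2)⁻¹) with hc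
  set E := (σ⁻¹ * Real.sqrt L + 2 * m4 / ε ^ 2 +
        L * Real.exp ((σ⁻¹) ^ 2 * (ε * L) - (L : ℝ) / 2 * Real.log (1 + (σ⁻¹) ^ 2))) with hE
  have hm4 := m4_nonneg
  have hE0 : 0 ≤ E := by positivity
  set M := (stdGaussian L).prod (stdGaussian L) with hM
  -- the log-sum part
  have hmeas : ∀ l : Fin L, Measurable (fun p : (Fin L → ℝ) × (Fin L → ℝ) =>
      Real.log (∑ k, Real.exp (eexpo σ⁻¹ l k p.1 p.2))) := fun l =>
    (Finset.measurable_fun_sum _ fun k _ => (measurable_eexpo σ⁻¹ l k).exp).log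
  have hnn : ∀ (l : Fin L) (p : (Fin L → ℝ) × (Fin L → ℝ)),
      0 ≤ Real.log (∑ k, Real.exp (eexpo σ⁻¹ l k p.1 p.2)) := fun l p => by
    apply Real.log_nonneg
    have := Finset.single_le_sum (f := fun k => Real.exp (eexpo σ⁻¹ l k p.1 p.2))
      (fun k _ => (Real.exp_pos _).le) (Finset.mem_univ l)
    simpa [eexpo_self] using this
  have hlint := fun l : Fin L => lintegral_log_bound σ⁻¹ ε (by positivity) hε l
  have hint : ∀ l : Fin L, Integrable (fun p : (Fin L → ℝ) × (Fin L → ℝ) =>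
      Real.log (∑ k, Real.exp (eexpo σ⁻¹ l k p.1 p.2))) M := fun l => by
    refine ⟨(hmeas l).aestronglyMeasurable, ?_⟩
    rw [hasFiniteIntegral_iff_ofReal (ae_of_all _ (hnn l))]
    exact (hlint l).trans_lt ENNReal.ofReal_lt_top
  have hval : ∀ l : Fin L, ∫ p, Real.log (∑ k, Real.exp (eexpo σ⁻¹ l k p.1 p.2)) ∂M ≤ E :=
    fun l => by
    rw [integral_eq_lintegral_of_nonneg_ae (ae_of_all _ (hnn l)) (hmeas l).aestronglyMeasurable]
    exact ENNReal.toReal_le_of_le_ofReal hE0 (hlint l)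
  have hq := fun l : Fin L => integral_qexpo σ hσ0 v hσ l
  have hiq : ∀ l : Fin L, Integrable (fun p => -Real.log L + qexpo v l p.1 (obs σ l p)) M :=
    fun l => (integrable_const _).fun_add (hq l).1
  have hJint : ∀ l : Fin L, Integrable (fun p => Real.log (dens v (p.1, obs σ l p))) M := fun l => by
    simp_rw [log_dens_obs σ hσ0 v hσ l]
    exact (hiq l).fun_add (hint l)
  have hJval : ∀ l : Fin L, ∫ p, Real.log (dens v (p.1, obs σ l p)) ∂M =
      c - Real.log L + ∫ p, Real.log (∑ k, Real.exp (eexpo σ⁻¹ l k p.1 p.2)) ∂M := fun l => by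
    simp_rw [log_dens_obs σ hσ0 v hσ l]
    rw [integral_add (hiq l) (hint l), integral_add (integrable_const _) (hq l).1, (hq l).2]
    simp
    rw [hc, hσ]; ring
  have hmo := fun l : Fin L => measurable_obs σ l
  have hlm : Measurable fun p => Real.log (dens (L := L) v p) := (measurable_dens v).log
  have hMI : mutualInfo (mraJoint1 L σ) = (L : ℝ)⁻¹ * ∑ l : Fin L,
      ∫ p, Real.log (dens v (p.1, obs σ l p)) ∂M := by
    rw [mutualInfo_eq σ v hσ hv, mraJoint1_eq, integral_smul_measure, integral_finsetSum_measure]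
    · simp only [ENNReal.toReal_inv, ENNReal.toReal_natCast, smul_eq_mul]
      congr 1
      refine Finset.sum_congr rfl fun l _ => ?_
      rw [integral_map (measurable_fst.prodMk (hmo l)).aemeasurable hlm.aestronglyMeasurable]
    · intro l _
      rw [integrable_map_measure hlm.aestronglyMeasurable
        (measurable_fst.prodMk (hmo l)).aemeasurable]
      exact hJint l
  have hlow : ∀ l : Fin L, c - Real.log L ≤ ∫ p, Real.log (dens v (p.1, obs σ l p)) ∂M := fun l => by
    rw [hJval]
    have := integral_nonneg (μ := M) (f := fun p => Real.log (∑ k, Real.exp (eexpo σ⁻¹ l k p.1 p.2))) (hnn l)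
    linarith
  have hup : ∀ l : Fin L, ∫ p, Real.log (dens v (p.1, obs σ l p)) ∂M ≤ c - Real.log L + E :=
    fun l => by
    rw [hJval]
    linarith [hval l]
  rw [hMI]
  have hconst : ∀ b : ℝ, (L : ℝ)⁻¹ * ∑ _l : Fin L, b = b := fun b => by
    simp
    field_simp
  constructor
  · calc c - Real.log L = (L : ℝ)⁻¹ * ∑ _l : Fin L, (c - Real.log L) := (hconst _).symm
      _ ≤ _ := by gcongr with l; exact hlow l
  · calc _ ≤ (L : ℝ)⁻¹ * ∑ _l : Fin L, (c - Real.log L + E) := by gcongr with l; exact hup l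
      _ = _ := hconst _

lemma tendsto_log_div : Tendsto (fun L : ℕ => Real.log L / L) atTop (nhds 0) :=
  (Real.isLittleO_log_id_atTop.tendsto_div_nhds_zero).comp tendsto_natCast_atTop_atTop

lemma tendsto_capacity (α : ℝ) (hα : 2 < α) :
    Tendsto (fun L : ℕ => (L : ℝ) / 2 * Real.log (1 + α * Real.log L / L) / Real.log L)
      atTop (nhds (α / 2)) := by
  have hu : Tendsto (fun L : ℕ => α * Real.log L / L) atTop (nhds 0) := by
    have := tendsto_log_div.const_mul α
    simpa [mul_div_assoc] using this
  have hlow : Tendsto (fun L : ℕ => α / 2 * (1 + α * Real.log L / L)⁻¹) atTop (nhds (α / 2)) := by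
    have := ((hu.const_add 1).inv₀ (by norm_num)).const_mul (α / 2)
    simpa using this
  refine tendsto_of_tendsto_of_tendsto_of_le_of_le' hlow tendsto_const_nhds ?_ ?_
  · filter_upwards [eventually_ge_atTop 2] with L hL2
    have hL : (1:ℝ) < L := by exact_mod_cast hL2
    have hlog : 0 < Real.log L := Real.log_pos hL
    have hup : 0 < α * Real.log L / L := by positivity
    have h := Real.one_sub_inv_le_log_of_pos (x := 1 + α * Real.log L / L) (by positivity)
    rw [le_div_iff₀ hlog]
    calc _ = (L : ℝ) / 2 * (1 - (1 + α * Real.log L / L)⁻¹) := by field_simp; ring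
      _ ≤ _ := by gcongr
  · filter_upwards [eventually_ge_atTop 2] with L hL2
    have hL : (1:ℝ) < L := by exact_mod_cast hL2
    have hlog : 0 < Real.log L := Real.log_pos hL
    have hup : 0 < α * Real.log L / L := by positivity
    have h := Real.log_le_sub_one_of_pos (x := 1 + α * Real.log L / L) (by positivity)
    rw [div_le_iff₀ hlog]
    calc _ ≤ (L : ℝ) / 2 * (1 + α * Real.log L / L - 1) := by gcongr
      _ = _ := by field_simp; ring

lemma tendsto_first (α : ℝ) (hα : 2 < α) :
    Tendsto (fun L : ℕ =>
        ((L : ℝ) / 2 * Real.log (1 + α * Real.log L / L) -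
          mutualInfo (mraJoint1 L (sigmaAlpha L α))) / Real.log L)
      atTop (nhds 1) := by
  set ε := (α / 2 - 1) / (2 * α) with hε
  have hα0 : 0 < α := by linarith
  have hε0 : 0 < ε := div_pos (by linarith) (by linarith)
  set K := 2 * m4 / ε ^ 2 + 1 with hK
  have hloginf : Tendsto (fun L : ℕ => Real.log L) atTop atTop :=
    Real.tendsto_log_atTop.comp tendsto_natCast_atTop_atTop
  have hlow : Tendsto (fun L : ℕ => 1 - (Real.sqrt α / Real.sqrt (Real.log L) + K / Real.log L))
      atTop (nhds 1) := by
    have h1 : Tendsto (fun L : ℕ => Real.sqrt α / Real.sqrt (Real.log L)) atTop (nhds 0) :=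
      tendsto_const_nhds.div_atTop (Real.tendsto_sqrt_atTop.comp hloginf)
    have h2 : Tendsto (fun L : ℕ => K / Real.log L) atTop (nhds 0) :=
      tendsto_const_nhds.div_atTop hloginf
    simpa using (h1.add h2).const_sub 1
  have hcap : ∀ᶠ L : ℕ in atTop, 1 + α * ε <
      (L : ℝ) / 2 * Real.log (1 + α * Real.log L / L) / Real.log L := by
    refine (tendsto_capacity α hα).eventually_const_lt ?_
    have : α * ε = (α / 2 - 1) / 2 := by rw [hε]; field_simp
    rw [this]; linarith
  have hb : ∀ᶠ L : ℕ in atTop,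
      1 - (Real.sqrt α / Real.sqrt (Real.log L) + K / Real.log L) ≤
        ((L : ℝ) / 2 * Real.log (1 + α * Real.log L / L) -
          mutualInfo (mraJoint1 L (sigmaAlpha L α))) / Real.log L ∧
        ((L : ℝ) / 2 * Real.log (1 + α * Real.log L / L) -
          mutualInfo (mraJoint1 L (sigmaAlpha L α))) / Real.log L ≤ 1 := by
    filter_upwards [eventually_ge_atTop 2, hcap] with L hL2 hcL
    have : NeZero L := ⟨by omega⟩
    have hL : (1:ℝ) < L := by exact_mod_cast hL2
    have hlog : 0 < Real.log L := Real.log_pos hL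
    set σ := sigmaAlpha L α with hσd
    have hσ0 : 0 < σ := by
      rw [hσd, sigmaAlpha]; positivity
    have hσ2 : σ ^ 2 = L / (α * Real.log L) := by
      rw [hσd, sigmaAlpha, Real.sq_sqrt (by positivity)]
    have hinv : (σ ^ 2)⁻¹ = α * Real.log L / L := by rw [hσ2, inv_div]
    have hb := mutualInfo_bounds (L := L) σ hσ0 ε hε0
    rw [inv_pow, hinv] at hb
    obtain ⟨h1, h2⟩ := hb
    set c := (L : ℝ) / 2 * Real.log (1 + α * Real.log L / L) with hc
    have hs : σ⁻¹ * Real.sqrt L = Real.sqrt α * Real.sqrt (Real.log L) := by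
      rw [← Real.sqrt_mul hα0.le, ← Real.sqrt_sq (inv_pos.mpr hσ0).le,
        ← Real.sqrt_mul (sq_nonneg _), inv_pow, hinv]
      congr 1
      field_simp
    have hexp : L * Real.exp (α * Real.log L / L * (ε * L) - c) ≤ 1 := by
      have e : (L : ℝ) = Real.exp (Real.log L) := (Real.exp_log (by positivity)).symm
      have e2 : α * Real.log L / L * (ε * L) = α * ε * Real.log L := by field_simp
      rw [e2]
      nth_rewrite 1 [e]
      rw [← Real.exp_add, Real.exp_le_one_iff]
      rw [lt_div_iff₀ hlog] at hcL
      linarith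
    rw [hs] at h2
    constructor
    · rw [le_div_iff₀ hlog]
      have hq : Real.sqrt (Real.log L) * Real.sqrt (Real.log L) = Real.log L :=
        Real.mul_self_sqrt hlog.le
      have hq0 : 0 < Real.sqrt (Real.log L) := Real.sqrt_pos.mpr hlog
      have e3 : (1 - (Real.sqrt α / Real.sqrt (Real.log L) + K / Real.log L)) * Real.log L =
          Real.log L - Real.sqrt α * Real.sqrt (Real.log L) - K := by
        have e4 : Real.sqrt α / Real.sqrt (Real.log L) * Real.log L =
            Real.sqrt α * Real.sqrt (Real.log L) := by
          nth_rewrite 2 [← hq]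
          field_simp
        have e5 : K / Real.log L * Real.log L = K := by field_simp
        rw [sub_mul, add_mul, e4, e5]; ring
      rw [e3, hK]
      linarith
    · rw [div_le_one hlog]
      linarith
  exact tendsto_of_tendsto_of_tendsto_of_le_of_le' hlow tendsto_const_nhds
    (hb.mono fun _ h => h.1) (hb.mono fun _ h => h.2)

/-- mutual information at high SNR. With `σ² = L/(α log L)` and `α > 2`
fixed, `I(X;Y) = (L/2)·log(1 + σ⁻²) − (1 + o(1))·log L`; equivalently
`I(X;Y)/log L → α/2 − 1`. (Here `σ⁻² = α log L / L`.) -/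
theorem mutual_info_high_snr (α : ℝ) (hα : 2 < α) :
    Tendsto (fun L : ℕ =>
        ((L : ℝ) / 2 * Real.log (1 + α * Real.log L / L) -
          mutualInfo (mraJoint1 L (sigmaAlpha L α))) / Real.log L)
      atTop (nhds 1) ∧
    Tendsto (fun L : ℕ => mutualInfo (mraJoint1 L (sigmaAlpha L α)) / Real.log L)
      atTop (nhds (α / 2 - 1)) := by
  refine ⟨tendsto_first α hα, ?_⟩
  refine ((tendsto_capacity α hα).sub (tendsto_first α hα)).congr fun L => ?_
  rw [sub_div]
  ring


end MRAformal
end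

section
/- Autocorrelation concentration for a Gaussian signal: there is a universal constant c > 0 such that for every L ≥ 1, every κ > 0, and X ~ N(0, I_L), the probability that either |L^{−1}‖X‖² − 1| ≥ κ or max_{ℓ ∈ {1,…,L−1}} L^{−1}|⟨X, R_ℓ X⟩| > κ is at most 2L·exp(−c·L·min(κ, κ²)). -/
open MeasureTheory ProbabilityTheory Filter
open scoped ENNReal

namespace MRAformal

lemma lint_pi {ι : Type*} [Fintype ι] (f : ι → ℝ → ℝ≥0∞) (hf : ∀ i, Measurable (f i)) :
    ∫⁻ x, ∏ i, f i (x i) ∂(Measure.pi fun _ : ι => gaussianReal 0 1)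
      = ∏ i, ∫⁻ y, f i y ∂(gaussianReal 0 1) := by
  rw [lintegral_prod_eq_prod_lintegral_of_indepFun Finset.univ
    (fun i (x : ι → ℝ) => f i (x i))
    (iIndepFun_pi (μ := fun _ : ι => gaussianReal 0 1) (X := f)
      (fun i => (hf i).aemeasurable))
    (fun i => (hf i).comp (measurable_pi_apply i))]
  refine Finset.prod_congr rfl fun i _ => ?_
  exact (measurePreserving_eval (fun _ : ι => gaussianReal 0 1) i).lintegral_comp (hf i)

lemma lint_exp_mul (a : ℝ) :
    ∫⁻ y, ENNReal.ofReal (Real.exp (a * y)) ∂(gaussianReal 0 1)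
      = ENNReal.ofReal (Real.exp (a ^ 2 / 2)) := by
  rw [← ofReal_integral_eq_lintegral_ofReal (integrable_exp_mul_gaussianReal a)
    (ae_of_all _ fun _ => (Real.exp_pos _).le)]
  have h := mgf_gaussianReal (p := gaussianReal 0 1) (X := id) (μ := 0) (v := 1) (by simp) a
  simp only [mgf, id] at h
  rw [h]; congr 2; simp

lemma lint_exp_sq (t : ℝ) (ht : t < 1 / 2) :
    ∫⁻ y, ENNReal.ofReal (Real.exp (t * y ^ 2)) ∂(gaussianReal 0 1)
      = ENNReal.ofReal (√(1 / (1 - 2 * t))) := by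
  rw [gaussianReal_of_var_ne_zero _ one_ne_zero,
    lintegral_withDensity_eq_lintegral_mul _ (measurable_gaussianPDF _ _) (by fun_prop)]
  have h1 : ∀ y : ℝ, (gaussianPDF 0 1 * fun y => ENNReal.ofReal (Real.exp (t * y ^ 2))) y
      = ENNReal.ofReal ((√(2 * Real.pi))⁻¹ * Real.exp (-(1 / 2 - t) * y ^ 2)) := by
    intro y
    simp only [Pi.mul_apply, gaussianPDF, gaussianPDFReal]
    rw [← ENNReal.ofReal_mul (by positivity), mul_assoc, ← Real.exp_add]
    simp only [NNReal.coe_one, mul_one, sub_zero]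
    congr 3; ring
  simp_rw [h1]
  rw [← ofReal_integral_eq_lintegral_ofReal
    ((integrable_exp_neg_mul_sq (by linarith)).const_mul _)
    (ae_of_all _ fun _ => by positivity), integral_const_mul, integral_gaussian]
  congr 1
  have h2 : 0 < 1 - 2 * t := by linarith
  rw [← Real.sqrt_inv, ← Real.sqrt_mul (by positivity)]
  congr 1
  have h3 : 1 / 2 - t ≠ 0 := by linarith
  have := Real.pi_pos
  field_simp

lemma lint_exp_sq_cent (t : ℝ) (ht : |t| ≤ 1 / 4) :
    ∫⁻ y, ENNReal.ofReal (Real.exp (t * (y ^ 2 - 1))) ∂(gaussianReal 0 1)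
      ≤ ENNReal.ofReal (Real.exp (2 * t ^ 2)) := by
  obtain ⟨h1, h2⟩ := abs_le.1 ht
  have h : ∀ y : ℝ, ENNReal.ofReal (Real.exp (t * (y ^ 2 - 1)))
      = ENNReal.ofReal (Real.exp (-t)) * ENNReal.ofReal (Real.exp (t * y ^ 2)) := by
    intro y
    rw [← ENNReal.ofReal_mul (by positivity), ← Real.exp_add]; congr 2; ring
  simp_rw [h]
  rw [lintegral_const_mul _ (by fun_prop), lint_exp_sq t (by linarith),
    ← ENNReal.ofReal_mul (by positivity)]
  apply ENNReal.ofReal_le_ofReal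
  have h3 : √(1 / (1 - 2 * t)) ≤ Real.exp (t + 2 * t ^ 2) := by
    rw [Real.sqrt_le_left (by positivity), ← Real.exp_nat_mul, div_le_iff₀ (by linarith)]
    push_cast
    rcases le_total 0 t with h0 | h0
    · have := Real.quadratic_le_exp_of_nonneg (x := 2 * (t + 2 * t ^ 2)) (by positivity)
      have h4 : 1 ≤ (1 + 2 * (t + 2 * t ^ 2) + (2 * (t + 2 * t ^ 2)) ^ 2 / 2) * (1 - 2 * t) := by
        have e : (1 + 2 * (t + 2 * t ^ 2) + (2 * (t + 2 * t ^ 2)) ^ 2 / 2) * (1 - 2 * t) - 1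
          = t ^ 2 * (2 - 4 * t - 8 * t ^ 2 - 16 * t ^ 3) := by ring
        have : 0 ≤ t ^ 2 * (2 - 4 * t - 8 * t ^ 2 - 16 * t ^ 3) := by
          apply mul_nonneg (by positivity)
          have a1 : t ^ 2 ≤ (1/4) ^ 2 := by gcongr
          have a2 : t ^ 3 ≤ (1/4) ^ 3 := by gcongr
          linarith
        linarith
      exact h4.trans (mul_le_mul_of_nonneg_right this (by linarith))
    · have := Real.add_one_le_exp (2 * (t + 2 * t ^ 2))
      refine le_trans ?_ (mul_le_mul_of_nonneg_right this (by linarith))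
      nlinarith [mul_nonneg (sq_nonneg t) (neg_nonneg.2 h0)]
  calc Real.exp (-t) * √(1 / (1 - 2 * t)) ≤ Real.exp (-t) * Real.exp (t + 2 * t ^ 2) := by gcongr
    _ = _ := by rw [← Real.exp_add]; congr 1; ring

lemma lint_exp_sq_le (v : ℝ) (h0 : 0 ≤ v) (hv : v ≤ 1 / 2) :
    ∫⁻ y, ENNReal.ofReal (Real.exp (v / 2 * y ^ 2)) ∂(gaussianReal 0 1)
      ≤ ENNReal.ofReal (Real.exp v) := by
  rw [lint_exp_sq _ (by linarith)]
  apply ENNReal.ofReal_le_ofReal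
  rw [Real.sqrt_le_left (by positivity), ← Real.exp_nat_mul, div_le_iff₀ (by linarith)]
  push_cast
  have := Real.add_one_le_exp (2 * v)
  refine le_trans ?_ (mul_le_mul_of_nonneg_right this (by linarith))
  nlinarith

/-- decoupled chaos bound -/
lemma lint_decoupled {ι : Type*} [Fintype ι] [DecidableEq ι] (σ : ι → ι)
    (hσ : Function.Injective σ) (S : Finset ι) (s : ℝ) (hs : s ^ 2 ≤ 1 / 2) :
    ∫⁻ x, ENNReal.ofReal (Real.exp (s * ∑ i, if i ∈ S ∧ σ i ∉ S then x i * x (σ i) else 0))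
        ∂(Measure.pi fun _ : ι => gaussianReal 0 1)
      ≤ ENNReal.ofReal (Real.exp (s ^ 2)) ^ Fintype.card ι := by
  let p : ι → Prop := fun i => i ∈ S
  let a : ({i // ¬ p i} → ℝ) → {i // p i} → ℝ :=
    fun z i => if h : p (σ i) then 0 else z ⟨σ i, h⟩
  have ha : ∀ i, Measurable (fun z => a z i) := by
    intro i
    by_cases h : p (σ i)
    · simp only [a, h, dite_true]; exact measurable_const
    · simp only [a, h, dite_false]; exact measurable_pi_apply _
  have hmp := measurePreserving_piEquivPiSubtypeProd (fun _ : ι => gaussianReal 0 1) p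
  let F : ({i // p i} → ℝ) × ({i // ¬ p i} → ℝ) → ℝ≥0∞ :=
    fun q => ∏ i, ENNReal.ofReal (Real.exp ((s * a q.2 i) * q.1 i))
  have hF : Measurable F := by
    apply Finset.measurable_prod
    intro i _
    have : Measurable (fun q : ({i // p i} → ℝ) × ({i // ¬ p i} → ℝ) => a q.2 i) :=
      (ha i).comp measurable_snd
    fun_prop
  have e1 : ∀ x : ι → ℝ,
      ENNReal.ofReal (Real.exp (s * ∑ i, if i ∈ S ∧ σ i ∉ S then x i * x (σ i) else 0))
      = F (MeasurableEquiv.piEquivPiSubtypeProd (fun _ : ι => ℝ) p x) := by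
    intro x
    simp only [F]
    rw [← ENNReal.ofReal_prod_of_nonneg (fun _ _ => (Real.exp_pos _).le), ← Real.exp_sum]
    congr 2
    rw [Finset.mul_sum]
    have : ∑ i, s * (if i ∈ S ∧ σ i ∉ S then x i * x (σ i) else 0)
      = ∑ i ∈ S, s * (if i ∈ S ∧ σ i ∉ S then x i * x (σ i) else 0) := by
      symm
      apply Finset.sum_subset (Finset.subset_univ _)
      intro i _ hi
      simp [hi]
    rw [this, ← Finset.sum_coe_sort S]
    refine Finset.sum_congr rfl fun i _ => ?_
    by_cases h : σ i ∈ S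
    · simp [h, a, p]
    · simp [h, a, p, MeasurableEquiv.piEquivPiSubtypeProd, Equiv.piEquivPiSubtypeProd]; ring
  simp_rw [e1]
  rw [hmp.lintegral_comp hF, lintegral_prod_symm _ hF.aemeasurable]
  have e2 : ∀ z, ∫⁻ y, F (y, z) ∂(Measure.pi fun _ : {i // p i} => gaussianReal 0 1)
      ≤ ∏ k, ENNReal.ofReal (Real.exp (s ^ 2 / 2 * z k ^ 2)) := by
    intro z
    simp only [F]
    rw [lint_pi (fun i y => ENNReal.ofReal (Real.exp (s * a z i * y))) (fun i => by fun_prop)]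
    simp_rw [lint_exp_mul]
    rw [← ENNReal.ofReal_prod_of_nonneg (fun _ _ => (Real.exp_pos _).le), ← Real.exp_sum,
      ← ENNReal.ofReal_prod_of_nonneg (fun _ _ => (Real.exp_pos _).le), ← Real.exp_sum]
    apply ENNReal.ofReal_le_ofReal
    apply Real.exp_le_exp.2
    let w : ι → ℝ := fun i => if h : p i then 0 else s ^ 2 / 2 * z ⟨i, h⟩ ^ 2
    have hw : ∀ i, 0 ≤ w i := by
      intro i; simp only [w]; split_ifs <;> positivity
    calc ∑ i, (s * a z i) ^ 2 / 2 = ∑ i : {i // p i}, w (σ i) := by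
          refine Finset.sum_congr rfl fun i _ => ?_
          by_cases h : p (σ i)
          · simp [a, w, h]
          · simp [a, w, h]; ring
      _ = ∑ i ∈ S, w (σ i) := Finset.sum_coe_sort S (fun i => w (σ i))
      _ ≤ ∑ i, w (σ i) := Finset.sum_le_univ_sum_of_nonneg fun i => hw _
      _ = ∑ i, w i := Equiv.sum_comp (Equiv.ofBijective σ (Finite.injective_iff_bijective.1 hσ)) w
      _ = ∑ i ∈ Sᶜ, w i := by
          symm
          apply Finset.sum_subset (Finset.subset_univ _)
          intro i _ hi
          have : p i := by simpa using hi
          simp [w, this]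
      _ = ∑ k : {i // ¬ p i}, w k := by
          apply Finset.sum_subtype
          intro x; simp [p]
      _ = _ := by
          refine Finset.sum_congr rfl fun k _ => ?_
          have := k.2
          simp only [w, this, dite_false]
  refine le_trans (lintegral_mono
    (g := fun z => ∏ k, ENNReal.ofReal (Real.exp (s ^ 2 / 2 * z k ^ 2))) fun z => ?_) ?_
  · convert e2 z
  calc _ = ∏ k : {i // ¬ p i}, ∫⁻ y, ENNReal.ofReal (Real.exp (s ^ 2 / 2 * y ^ 2))
        ∂(gaussianReal 0 1) :=
      lint_pi (fun _ y => ENNReal.ofReal (Real.exp (s ^ 2 / 2 * y ^ 2))) (fun i => by fun_prop)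
    _ ≤ ∏ k : {i // ¬ p i}, ENNReal.ofReal (Real.exp (s ^ 2)) :=
      Finset.prod_le_prod' fun _ _ => lint_exp_sq_le _ (sq_nonneg s) hs
    _ = ENNReal.ofReal (Real.exp (s ^ 2)) ^ Fintype.card {i // ¬ p i} := by simp
    _ ≤ _ := by
      apply pow_le_pow_right₀
      · rw [ENNReal.one_le_ofReal]; exact Real.one_le_exp (sq_nonneg s)
      · exact Fintype.card_subtype_le _

lemma card_sep {ι : Type*} [Fintype ι] [DecidableEq ι] (i j : ι) (h : i ≠ j) :
    4 * ((Finset.univ : Finset (Finset ι)).filter fun S => i ∈ S ∧ j ∉ S).card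
      = 2 ^ Fintype.card ι := by
  have e : ((Finset.univ : Finset (Finset ι)).filter fun S => i ∈ S ∧ j ∉ S)
      = Finset.Icc {i} {j}ᶜ := by
    ext S
    simp only [Finset.mem_filter, Finset.mem_univ, true_and, Finset.mem_Icc,
      Finset.singleton_subset_iff, Finset.subset_compl_singleton]
  have hsub : ({i} : Finset ι) ⊆ {j}ᶜ := by simpa using h.symm
  rw [e, Finset.card_Icc_finset hsub, Finset.card_compl]
  have : 1 < Fintype.card ι := Fintype.one_lt_card_iff.2 ⟨i, j, h⟩
  obtain ⟨m, hm⟩ : ∃ m, Fintype.card ι = m + 2 := ⟨Fintype.card ι - 2, by omega⟩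
  simp only [Finset.card_singleton, hm]
  rw [show m + 2 - 1 - 1 = m by omega]; ring

lemma lint_chaos {ι : Type*} [Fintype ι] [DecidableEq ι] (σ : ι → ι)
    (hσ : Function.Injective σ) (hne : ∀ i, i ≠ σ i) (t : ℝ) (ht : (4 * t) ^ 2 ≤ 1 / 2) :
    ∫⁻ x, ENNReal.ofReal (Real.exp (t * ∑ i, x i * x (σ i)))
        ∂(Measure.pi fun _ : ι => gaussianReal 0 1)
      ≤ ENNReal.ofReal (Real.exp ((4 * t) ^ 2)) ^ Fintype.card ι := by
  set N : ℝ := 2 ^ Fintype.card ι with hN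
  have hNpos : 0 < N := by positivity
  let G : Finset ι → (ι → ℝ) → ℝ := fun S x =>
    Real.exp (4 * t * ∑ i, if i ∈ S ∧ σ i ∉ S then x i * x (σ i) else 0)
  have key : ∀ x : ι → ℝ, Real.exp (t * ∑ i, x i * x (σ i)) ≤ ∑ S, N⁻¹ * G S x := by
    intro x
    have hJ := convexOn_exp.map_sum_le (t := (Finset.univ : Finset (Finset ι)))
      (w := fun _ => N⁻¹)
      (p := fun S => 4 * t * ∑ i, if i ∈ S ∧ σ i ∉ S then x i * x (σ i) else 0)
      (fun _ _ => by positivity) (by simp [hN]) (fun _ _ => Set.mem_univ _)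
    simp only [smul_eq_mul] at hJ
    refine le_trans (le_of_eq ?_) hJ
    congr 1
    rw [← Finset.mul_sum, ← Finset.mul_sum, Finset.sum_comm]
    have : ∀ i, (∑ S : Finset ι, if i ∈ S ∧ σ i ∉ S then x i * x (σ i) else 0)
        = N / 4 * (x i * x (σ i)) := by
      intro i
      rw [← Finset.sum_filter, Finset.sum_const, nsmul_eq_mul]
      have := card_sep i (σ i) (hne i)
      have h' : (4 : ℝ) * ((Finset.univ : Finset (Finset ι)).filter
        fun S => i ∈ S ∧ σ i ∉ S).card = N := by rw [hN]; exact_mod_cast this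
      rw [← h']; ring
    simp_rw [this]
    rw [← Finset.mul_sum]
    field_simp
  calc _ ≤ ∫⁻ x, ∑ S, ENNReal.ofReal N⁻¹ * ENNReal.ofReal (G S x)
        ∂(Measure.pi fun _ : ι => gaussianReal 0 1) := by
        refine lintegral_mono fun x => ?_
        refine (ENNReal.ofReal_le_ofReal (key x)).trans (le_of_eq ?_)
        rw [ENNReal.ofReal_sum_of_nonneg (fun S _ => mul_nonneg (by positivity)
          (Real.exp_pos _).le)]
        refine Finset.sum_congr rfl fun S _ => ENNReal.ofReal_mul (by positivity)
    _ = ∑ S, ENNReal.ofReal N⁻¹ * ∫⁻ x, ENNReal.ofReal (G S x)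
        ∂(Measure.pi fun _ : ι => gaussianReal 0 1) := by
        have hm : ∀ S, Measurable fun x => ENNReal.ofReal (G S x) := by
          intro S
          have : Measurable fun x : ι → ℝ =>
              ∑ i, if i ∈ S ∧ σ i ∉ S then x i * x (σ i) else 0 := by
            apply Finset.measurable_sum
            intro i _
            split_ifs <;> fun_prop
          fun_prop
        rw [lintegral_finsetSum _ (fun S _ => (hm S).const_mul _)]
        exact Finset.sum_congr rfl fun S _ => lintegral_const_mul _ (hm S)
    _ ≤ ∑ S : Finset ι, ENNReal.ofReal N⁻¹ *
        ENNReal.ofReal (Real.exp ((4 * t) ^ 2)) ^ Fintype.card ι :=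
        Finset.sum_le_sum fun S _ => mul_le_mul_right (lint_decoupled σ hσ S (4 * t) ht) _
    _ = _ := by
        rw [← Finset.sum_mul, ← ENNReal.ofReal_sum_of_nonneg (fun _ _ => by positivity)]
        simp [hN]

/-- Chernoff in `lintegral` form. -/
lemma chernoff {Ω : Type*} [MeasurableSpace Ω] (μ : Measure Ω) (f : Ω → ℝ) (hf : Measurable f)
    (t ε B : ℝ) (ht : 0 ≤ t)
    (hB : ∫⁻ x, ENNReal.ofReal (Real.exp (t * f x)) ∂μ ≤ ENNReal.ofReal (Real.exp B)) :
    μ {x | ε ≤ f x} ≤ ENNReal.ofReal (Real.exp (B - t * ε)) := by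
  have h1 : μ {x | ε ≤ f x} ≤ μ {x | 1 ≤ ENNReal.ofReal (Real.exp (t * (f x - ε)))} := by
    apply measure_mono
    intro x hx
    simp only [Set.mem_ofPred_eq] at hx ⊢
    rw [ENNReal.one_le_ofReal]
    exact Real.one_le_exp (mul_nonneg ht (by linarith))
  refine h1.trans ?_
  have h2 := mul_meas_ge_le_lintegral₀ (μ := μ)
    (f := fun x => ENNReal.ofReal (Real.exp (t * (f x - ε)))) (by fun_prop) 1
  rw [one_mul] at h2
  refine h2.trans ?_
  have h : ∀ x, ENNReal.ofReal (Real.exp (t * (f x - ε)))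
      = ENNReal.ofReal (Real.exp (-(t * ε))) * ENNReal.ofReal (Real.exp (t * f x)) := by
    intro x
    rw [← ENNReal.ofReal_mul (by positivity), ← Real.exp_add]; congr 2; ring
  simp_rw [h]
  rw [lintegral_const_mul _ (by fun_prop)]
  refine (mul_le_mul_right hB _).trans (le_of_eq ?_)
  rw [← ENNReal.ofReal_mul (by positivity), ← Real.exp_add]; congr 2; ring

/-- Two-sided tail from the MGF bound `exp (16 t² L)` on `|t| ≤ 1/32`. -/
lemma two_sided {Ω : Type*} [MeasurableSpace Ω] (μ : Measure Ω) (f : Ω → ℝ) (hf : Measurable f)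
    (L : ℕ) (κ : ℝ) (hκ : 0 < κ)
    (hB : ∀ t : ℝ, |t| ≤ 1 / 32 → ∫⁻ x, ENNReal.ofReal (Real.exp (t * f x)) ∂μ
      ≤ ENNReal.ofReal (Real.exp (16 * t ^ 2)) ^ L) :
    μ {x | L * κ ≤ |f x|} ≤
      2 * ENNReal.ofReal (Real.exp (-(1 / 64) * L * min κ (κ ^ 2))) := by
  set m := min κ 1 with hm
  have hm0 : 0 < m := lt_min hκ one_pos
  have hm1 : m ≤ 1 := min_le_right _ _
  have hmκ : m ≤ κ := min_le_left _ _
  have hmm : min κ (κ ^ 2) = κ * m := by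
    rw [hm, mul_min_of_nonneg _ _ hκ.le, mul_one, min_comm, sq]
  have hE : 16 * (m / 32) ^ 2 * L - m / 32 * (L * κ) ≤ -(1 / 64) * L * min κ (κ ^ 2) := by
    rw [hmm]
    have : (0:ℝ) ≤ L * (m * (κ - m)) :=
      mul_nonneg (Nat.cast_nonneg _) (mul_nonneg hm0.le (by linarith))
    nlinarith
  have hpow : ∀ t : ℝ, ENNReal.ofReal (Real.exp (16 * t ^ 2)) ^ L
      = ENNReal.ofReal (Real.exp (16 * t ^ 2 * L)) := by
    intro t
    rw [← ENNReal.ofReal_pow (by positivity), ← Real.exp_nat_mul]; congr 2; ring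
  have hab : |m / 32| ≤ 1 / 32 := by rw [abs_of_pos (by positivity)]; linarith
  have hp := chernoff μ f hf (m / 32) (L * κ) (16 * (m / 32) ^ 2 * L) (by positivity)
    (by rw [← hpow]; exact hB _ hab)
  have hn := chernoff μ (fun x => - f x) hf.neg (m / 32) (L * κ) (16 * (m / 32) ^ 2 * L)
    (by positivity)
    (by
      rw [← hpow]
      have := hB (-(m / 32)) (by rwa [abs_neg])
      simpa only [neg_sq, mul_neg, neg_mul] using this)
  have hsub : {x | L * κ ≤ |f x|} ⊆ {x | L * κ ≤ f x} ∪ {x | L * κ ≤ - f x} := by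
    intro x hx
    exact le_abs.1 (show L * κ ≤ |f x| from hx)
  refine (measure_mono hsub).trans ((measure_union_le _ _).trans ?_)
  rw [two_mul]
  exact add_le_add (hp.trans (ENNReal.ofReal_le_ofReal (Real.exp_le_exp.2 hE)))
    (hn.trans (ENNReal.ofReal_le_ofReal (Real.exp_le_exp.2 hE)))

theorem gaussian_autocorrelation_concentration :
    ∃ c : ℝ, 0 < c ∧ ∀ (L : ℕ), 1 ≤ L → ∀ κ : ℝ, 0 < κ →
      stdGaussian L
          {x | κ ≤ |(L : ℝ)⁻¹ * ∑ j, x j ^ 2 - 1| ∨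
            ∃ ℓ : Fin L, ℓ.val ≠ 0 ∧ κ < (L : ℝ)⁻¹ * |∑ j, x j * x (j + ℓ)|} ≤
        ENNReal.ofReal (2 * L * Real.exp (-c * L * min κ (κ ^ 2))) := by
  refine ⟨1 / 64, by norm_num, ?_⟩
  intro L hL κ hκ
  have : NeZero L := ⟨by omega⟩
  have hL0 : (0 : ℝ) < L := by exact_mod_cast hL
  set E := ENNReal.ofReal (Real.exp (-(1 / 64) * L * min κ (κ ^ 2))) with hE
  let A : Fin L → Set (Fin L → ℝ) := fun ℓ =>
    if ℓ = 0 then {x | L * κ ≤ |∑ j, (x j ^ 2 - 1)|}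
    else {x | L * κ ≤ |∑ j, x j * x (j + ℓ)|}
  have hA : ∀ ℓ, stdGaussian L (A ℓ) ≤ 2 * E := by
    intro ℓ
    by_cases h : ℓ = 0
    · simp only [A, h, if_true]
      refine two_sided (stdGaussian L) (fun x => ∑ j, (x j ^ 2 - 1)) (by fun_prop) L κ hκ ?_
      intro t ht
      have e : ∀ x : Fin L → ℝ, ENNReal.ofReal (Real.exp (t * ∑ j, (x j ^ 2 - 1)))
          = ∏ j, ENNReal.ofReal (Real.exp (t * (x j ^ 2 - 1))) := by
        intro x
        rw [← ENNReal.ofReal_prod_of_nonneg (fun _ _ => (Real.exp_pos _).le), ← Real.exp_sum,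
          Finset.mul_sum]
      simp_rw [e]
      rw [stdGaussian, lint_pi (fun _ y => ENNReal.ofReal (Real.exp (t * (y ^ 2 - 1))))
        (fun _ => by fun_prop), Finset.prod_const, Finset.card_univ, Fintype.card_fin]
      gcongr
      refine (lint_exp_sq_cent t (by linarith)).trans ?_
      apply ENNReal.ofReal_le_ofReal
      apply Real.exp_le_exp.2
      nlinarith [sq_nonneg t]
    · simp only [A, h, if_false]
      refine two_sided (stdGaussian L) (fun x => ∑ j, x j * x (j + ℓ)) (by fun_prop) L κ hκ ?_
      intro t ht
      have ht2 : t ^ 2 ≤ (1 / 32) ^ 2 := sq_le_sq' (abs_le.1 ht).1 (abs_le.1 ht).2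
      have := lint_chaos (fun j : Fin L => j + ℓ) (add_left_injective ℓ)
        (fun i hi => h (by simpa using hi.symm)) t (by nlinarith)
      rw [Fintype.card_fin] at this
      refine this.trans (le_of_eq ?_)
      congr 3; ring
  have hsub : {x : Fin L → ℝ | κ ≤ |(L : ℝ)⁻¹ * ∑ j, x j ^ 2 - 1| ∨
      ∃ ℓ : Fin L, ℓ.val ≠ 0 ∧ κ < (L : ℝ)⁻¹ * |∑ j, x j * x (j + ℓ)|} ⊆ ⋃ ℓ, A ℓ := by
    rintro x (hx | ⟨ℓ, hℓ, hx⟩)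
    · refine Set.mem_iUnion.2 ⟨0, ?_⟩
      simp only [A, if_true, Set.mem_ofPred_eq]
      have : ∑ j, (x j ^ 2 - 1) = L * ((L : ℝ)⁻¹ * ∑ j, x j ^ 2 - 1) := by
        rw [Finset.sum_sub_distrib]; simp; field_simp
      rw [this, abs_mul, abs_of_pos hL0]
      gcongr
    · refine Set.mem_iUnion.2 ⟨ℓ, ?_⟩
      have h : ℓ ≠ 0 := by rintro rfl; simp at hℓ
      simp only [A, h, if_false, Set.mem_ofPred_eq]
      rw [inv_mul_eq_div, lt_div_iff₀ hL0] at hx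
      linarith
  calc _ ≤ stdGaussian L (⋃ ℓ, A ℓ) := measure_mono hsub
    _ ≤ ∑ ℓ, stdGaussian L (A ℓ) := measure_iUnion_fintype_le _ _
    _ ≤ ∑ ℓ : Fin L, 2 * E := Finset.sum_le_sum fun ℓ _ => hA ℓ
    _ = _ := by
      rw [Finset.sum_const, Finset.card_univ, Fintype.card_fin, nsmul_eq_mul,
        ENNReal.ofReal_mul (by positivity), ENNReal.ofReal_mul (by positivity), ← hE]
      simp
      ring

end MRAformal
end
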